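/- arXiv:0710.1972 — 2 statements merged into one kernel-verified Lean document; each statement's English description precedes it below -/
import Mathlib

section
/- For every n ≥ 1, the ℂ[Sₙ]-module Vₙ given by π · I_w = (−1)^{inv_w(π)} I_{πwπ⁻¹} (extended linearly to the group algebra) is a Gelfand model for the group algebra ℂ[Sₙ]: for every simple ℂ[Sₙ]-module S, dim_ℂ Hom_{ℂ[Sₙ]}(S, Vₙ) = 1. -/
open Equiv

/-- The set of involutions in `Sₙ` (elements `w` with `w² = id`). -/
abbrev SymInv (n : ℕ) : Type := {w : Equiv.Perm (Fin n) // w * w = 1}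

/-- `Vₙ`: the complex vector space with basis `{I_w : w an involution in Sₙ}`. -/
abbrev Vn (n : ℕ) : Type := SymInv n →₀ ℂ

/-- `inv_w(π) = |Inv(π) ∩ Pair(w)|`. -/
noncomputable def invw (n : ℕ) (w π : Equiv.Perm (Fin n)) : ℕ :=
  {p : Fin n × Fin n | p.1 < p.2 ∧ w p.1 = p.2 ∧ π p.2 < π p.1}.ncard

/-- Conjugation of an involution by a permutation: `π w π⁻¹`. -/
def conjInv (n : ℕ) (π : Equiv.Perm (Fin n)) (w : SymInv n) : SymInv n :=
  ⟨π * w.1 * π⁻¹, by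
    have h : π * w.1 * π⁻¹ * (π * w.1 * π⁻¹) = π * (w.1 * w.1) * π⁻¹ := by group
    rw [h, w.2, mul_one, mul_inv_cancel]⟩

/-!
The character of `Vₙ` at `π` is the sum of the signs `(-1) ^ inv_w(π)` over the involutions `w`
commuting with `π`, and such a sign is the sign of the permutation induced by `π` on the support of
`w`. If `w` stabilises an even cycle of `π`, multiplying `w` by the half turn of that cycle changes
the sign, so these involutions cancel. The remaining ones have sign `1`, and twisting them by powers
of `π` matches them with the square roots of `π`.

The multiplicity of a simple module in a module whose character counts square roots is its
Frobenius–Schur indicator. For a symmetric group this indicator is `1`: every permutation is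
conjugated to its inverse by a permutation fixing a given point, and if every element of `G` is
conjugated to its inverse by an element of a subgroup `K`, then every operator commuting with `K` is
self-adjoint for an invariant form `B` on an irreducible representation of `G`. By induction `K`
preserves a nonzero symmetric form `C(x, y) = B(A x, y)` with such an operator `A`, so `B` cannot be
alternating.
-/

theorem sign_eq_neg_one_pow_of_commute_not {β : Type*} [Fintype β] [DecidableEq β]
    (f : Perm (β × Bool)) (hf : ∀ a, f (a, true) = ((f (a, false)).1, !(f (a, false)).2)) :
    Perm.sign f = (-1) ^ Finset.card {a | (f (a, false)).2 = true} := by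
  have hinj : Function.Injective fun a => (f (a, false)).1 := by
    intro a b hab
    by_cases h : (f (a, false)).2 = (f (b, false)).2
    · exact congrArg Prod.fst (f.injective (Prod.ext hab h))
    · have : f (a, false) = f (b, true) := by
        rw [hf]
        exact Prod.ext hab (Bool.eq_not_of_ne h)
      exact congrArg Prod.fst (f.injective this)
  let τ : Perm β := Equiv.ofBijective _ (Finite.injective_iff_bijective.1 hinj)
  let ε : β → Perm Bool := fun a => if (f (a, false)).2 = true then swap false true else 1
  have hfactor : f = prodCongrLeft (fun _ => τ) * prodCongrRight ε := by
    ext ⟨a, _ | _⟩ : 1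
    · by_cases h : (f (a, false)).2 = true <;> simp [ε, τ, h, Prod.ext_iff]
    · by_cases h : (f (a, false)).2 = true <;> simp [ε, τ, h, hf]
  rw [hfactor, Perm.sign_mul, Perm.sign_prodCongrLeft, Perm.sign_prodCongrRight,
    Fintype.prod_bool, Int.units_mul_self, one_mul, ← hfactor]
  simp only [ε, apply_ite Perm.sign, Perm.sign_swap Bool.false_ne_true, Perm.sign_one]
  rw [Finset.prod_ite, Finset.prod_const, Finset.prod_const_one, mul_one]

theorem sign_eq_neg_one_pow_card_transversal {β : Type*} [Fintype β] [DecidableEq β]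
    {f w : Perm β} (hw : w * w = 1) (hfw : Commute f w) (p : β → Prop) [DecidablePred p]
    (hp : ∀ z, p (w z) ↔ ¬ p z) :
    Perm.sign f = (-1) ^ Finset.card {z | p z ∧ ¬ p (f z)} := by
  have hww (z) : w (w z) = z := DFunLike.congr_fun hw z
  have hcomm (z) : f (w z) = w (f z) := DFunLike.congr_fun hfw.eq z
  let e : {z // p z} × Bool ≃ β :=
    { toFun := fun a => bif a.2 then w a.1 else a.1
      invFun := fun z => if h : p z then (⟨z, h⟩, false) else (⟨w z, (hp z).2 h⟩, true)
      left_inv := by rintro ⟨⟨z, hz⟩, _ | _⟩ <;> simp [hz, hp, hww]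
      right_inv := fun z => by by_cases h : p z <;> simp [h, hww] }
  have he_not (z) : e.symm (w z) = ((e.symm z).1, !(e.symm z).2) := by
    obtain ⟨⟨a, _ | _⟩, rfl⟩ := e.surjective z <;> simp [e, hp, hww, a.2]
  have he_snd (z) : (e.symm z).2 = true ↔ ¬ p z := by
    by_cases h : p z <;> simp [e, h]
  have he_false (a) : e (a, false) = a := rfl
  have he_true (a) : e (a, true) = w a := rfl
  have hf_symm (a b) : e.symm.permCongr f (a, b) = e.symm (f (e (a, b))) := rfl
  rw [← Perm.sign_permCongr e.symm f, sign_eq_neg_one_pow_of_commute_not _ fun a => by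
    rw [hf_symm, hf_symm, he_true, hcomm, he_not, he_false]]
  congr 1
  simp only [hf_symm, he_false, he_snd]
  refine Finset.card_bij (fun a _ => (a : β)) (fun a ha => ?_)
    (fun _ _ _ _ => Subtype.ext) fun z hz => ?_
  · simpa [a.2] using ha
  · obtain ⟨hz, hfz⟩ : p z ∧ ¬ p (f z) := by simpa using hz
    exact ⟨⟨z, hz⟩, by simpa using hfz, rfl⟩

theorem apply_apply_eq_iff_of_commute {α : Type*} {π w : Perm α} (h : Commute π w) (z : α) :
    w (π z) = π z ↔ w z = z := by
  rw [← Perm.mul_apply, ← h.eq, Perm.mul_apply, π.apply_eq_iff_eq]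

section Sign

variable {α : Type*} [DecidableEq α] {π w : Perm α}

/-- The permutation that agrees with `π` on the support of `w` and is the identity elsewhere. -/
def restrictSupport (h : Commute π w) : Perm α :=
  Perm.ofSubtype (π.subtypePerm (p := fun z => w z ≠ z)
    fun z => (apply_apply_eq_iff_of_commute h z).not)

theorem restrictSupport_apply (h : Commute π w) (z : α) :
    restrictSupport h z = if w z = z then z else π z := by
  split_ifs with hz
  · exact Perm.ofSubtype_subtypePerm_of_not_mem (p := fun z => w z ≠ z) _ (not_not.2 hz)
  · exact Perm.ofSubtype_subtypePerm_of_mem (p := fun z => w z ≠ z) _ hz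

theorem sign_restrictSupport_eq_neg_one_pow [Fintype α] (h : Commute π w) (hw : w * w = 1)
    (p : α → Prop) [DecidablePred p] (hp : ∀ z, w z ≠ z → (p (w z) ↔ ¬ p z)) :
    Perm.sign (restrictSupport h) = (-1) ^ Finset.card {z | w z ≠ z ∧ p z ∧ ¬ p (π z)} := by
  have hmaps (z) : w (w z) ≠ w z ↔ w z ≠ z := w.apply_eq_iff_eq.not
  have hcomm : Commute (π.subtypePerm (p := fun z => w z ≠ z)
      fun z => (apply_apply_eq_iff_of_commute h z).not) (w.subtypePerm hmaps) :=
    Equiv.ext fun z => Subtype.ext (DFunLike.congr_fun h.eq z.1)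
  rw [restrictSupport, Perm.sign_ofSubtype, sign_eq_neg_one_pow_card_transversal
    (w := w.subtypePerm hmaps) (Equiv.ext fun z => Subtype.ext (DFunLike.congr_fun hw z.1)) hcomm
    (fun z => p z) fun z => hp z z.2]
  congr 1
  refine Finset.card_bij (fun z _ => (z : α)) (fun z hz => ?_) (fun _ _ _ _ => Subtype.ext)
    fun z hz => ?_
  · exact Finset.mem_filter.2 ⟨Finset.mem_univ _, z.2, (Finset.mem_filter.1 hz).2⟩
  · obtain ⟨-, hwz, hz⟩ := Finset.mem_filter.1 hz
    exact ⟨⟨z, hwz⟩, Finset.mem_filter.2 ⟨Finset.mem_univ _, hz⟩, rfl⟩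

end Sign

theorem invw_eq_card (n : ℕ) (w π : Perm (Fin n)) :
    invw n w π = Finset.card {z : Fin n | z < w z ∧ π (w z) < π z} := by
  have himage : {p : Fin n × Fin n | p.1 < p.2 ∧ w p.1 = p.2 ∧ π p.2 < π p.1} =
      (fun z => (z, w z)) '' {z | z < w z ∧ π (w z) < π z} := by
    ext ⟨a, b⟩
    constructor
    · rintro ⟨hlt, hw : w a = b, hπ⟩
      subst hw
      exact ⟨a, ⟨hlt, hπ⟩, rfl⟩
    · rintro ⟨z, ⟨hlt, hπ⟩, ⟨⟩⟩
      exact ⟨hlt, rfl, hπ⟩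
  rw [invw, himage, Set.ncard_image_of_injective _ fun a b h => (Prod.mk.inj h).1,
    ← Set.ncard_coe_finset, Finset.coe_filter_univ]

theorem neg_one_pow_invw {n : ℕ} {w π : Perm (Fin n)} (h : Commute π w) (hw : w * w = 1) :
    (-1) ^ invw n w π = Perm.sign (restrictSupport h) := by
  have hww (z) : w (w z) = z := DFunLike.congr_fun hw z
  rw [sign_restrictSupport_eq_neg_one_pow h hw (fun z => z < w z) fun z hz => by
    rw [hww, not_lt, hz.le_iff_lt], invw_eq_card]
  congr 2
  ext z
  have hcomm : π (w z) = w (π z) := DFunLike.congr_fun h.eq z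
  rcases eq_or_ne (w z) z with hz | hz
  · simp [hz]
  · have hπz : w (π z) ≠ π z := (apply_apply_eq_iff_of_commute h z).not.2 hz
    simp [hz, hcomm, hπz.le_iff_lt]

section HalfTurn

variable {α : Type*} {π w : Perm α} {x z : α}

theorem sameCycle_apply_apply_of_commute (h : Commute π w) :
    π.SameCycle (w x) (w z) ↔ π.SameCycle x z := by
  conv_lhs => rw [← mul_inv_eq_of_eq_mul h.symm.eq]
  rw [Perm.sameCycle_conj]
  simp only [Perm.inv_def, symm_apply_apply]

variable [Fintype α] [DecidableEq α]

theorem cycleOf_zpow_apply (π : Perm α) (x z : α) (i : ℤ) :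
    (π.cycleOf x ^ i) z = if π.SameCycle x z then (π ^ i) z else z := by
  split_ifs with hz
  · rw [hz.cycleOf_eq, Perm.cycleOf_zpow_apply_self]
  · exact Perm.zpow_apply_eq_self_of_apply_eq_self (Perm.cycleOf_apply_of_not_sameCycle hz) i

theorem zpow_apply_eq_self_iff_orderOf_cycleOf_dvd (π : Perm α) (x : α) (i : ℤ) :
    (π ^ i) x = x ↔ (orderOf (π.cycleOf x) : ℤ) ∣ i := by
  rw [orderOf_dvd_iff_zpow_eq_one]
  constructor
  · intro h
    ext z
    rw [cycleOf_zpow_apply]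
    split_ifs with hz
    · obtain ⟨j, rfl⟩ := hz
      rw [← Perm.mul_apply, zpow_mul_comm, Perm.mul_apply, h, Perm.one_apply]
    · rfl
  · intro h
    rw [← Perm.cycleOf_zpow_apply_self, h, Perm.one_apply]

theorem zpow_apply_eq_zpow_apply_iff (π : Perm α) (x : α) (i j : ℤ) :
    (π ^ i) x = (π ^ j) x ↔ (orderOf (π.cycleOf x) : ℤ) ∣ i - j := by
  rw [← zpow_apply_eq_self_iff_orderOf_cycleOf_dvd, sub_eq_neg_add, zpow_add, Perm.mul_apply,
    zpow_neg, Perm.inv_eq_iff_eq]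

theorem sign_cycleOf_of_even_orderOf (h : Even (orderOf (π.cycleOf x))) :
    Perm.sign (π.cycleOf x) = -1 := by
  have hx : π x ≠ x := fun hx => by
    rw [(Perm.cycleOf_eq_one_iff π).2 hx, orderOf_one] at h
    exact Nat.not_even_one h
  rw [(π.isCycle_cycleOf hx).sign, ← (π.isCycle_cycleOf hx).orderOf, h.neg_one_pow]

theorem commute_cycleOf (h : Commute π w) (hx : π.SameCycle x (w x)) :
    Commute (π.cycleOf x) w := by
  refine Equiv.ext fun z => ?_
  have hz : π.SameCycle x (w z) ↔ π.SameCycle x z :=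
    Iff.trans ⟨hx.symm.trans, hx.trans⟩ (sameCycle_apply_apply_of_commute h)
  have hcomm : π (w z) = w (π z) := DFunLike.congr_fun h.eq z
  simp only [Perm.mul_apply, Perm.cycleOf_apply, hz, hcomm, apply_ite w]

/-- The half turn of the cycle of `π` through `x`, meant for cycles of even length. -/
noncomputable def halfTurn (π : Perm α) (x : α) : Perm α :=
  π.cycleOf x ^ (orderOf (π.cycleOf x) / 2)

theorem halfTurn_apply (π : Perm α) (x z : α) :
    halfTurn π x z = if π.SameCycle x z then (π ^ (orderOf (π.cycleOf x) / 2)) z else z :=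
  mod_cast cycleOf_zpow_apply π x z (orderOf (π.cycleOf x) / 2 : ℕ)

theorem sameCycle_halfTurn (π : Perm α) (x z : α) : π.SameCycle z (halfTurn π x z) := by
  rw [halfTurn_apply]
  split_ifs
  · exact Perm.sameCycle_pow_right.2 (.refl π z)
  · exact .refl π z

theorem halfTurn_mul_self (h : Even (orderOf (π.cycleOf x))) :
    halfTurn π x * halfTurn π x = 1 := by
  rw [halfTurn, ← pow_add, ← two_mul, Nat.two_mul_div_two_of_even h, pow_orderOf_eq_one]

theorem commute_halfTurn (h : Commute π w) (hx : π.SameCycle x (w x)) :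
    Commute w (halfTurn π x) :=
  ((commute_cycleOf h hx).pow_left _).symm

theorem halfTurn_apply_self_ne (h : Even (orderOf (π.cycleOf x))) : halfTurn π x x ≠ x := by
  rw [halfTurn_apply, if_pos (.refl π x), ← zpow_natCast, Ne,
    zpow_apply_eq_self_iff_orderOf_cycleOf_dvd]
  have := orderOf_pos (π.cycleOf x)
  norm_cast
  exact Nat.not_dvd_of_pos_of_lt (by grind) (by grind)

theorem orderOf_cycleOf_dvd_of_mul_self_eq_zpow {f : Perm α} {k i : ℤ} (h : Commute π f)
    (hff : f * f = π ^ k) (hi : (π ^ i) x = f x) :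
    (orderOf (π.cycleOf x) : ℤ) ∣ i + i - k := by
  have hcomm : (π ^ i) (f x) = f ((π ^ i) x) := DFunLike.congr_fun (h.zpow_left i).eq x
  rw [← zpow_apply_eq_zpow_apply_iff, zpow_add, Perm.mul_apply, hi, hcomm, hi, ← Perm.mul_apply,
    hff]

theorem apply_eq_self_or_eq_halfTurn (h : Commute π w) (hw : w * w = 1)
    (hx : π.SameCycle x (w x)) (heven : Even (orderOf (π.cycleOf x))) :
    w x = x ∨ w x = halfTurn π x x := by
  obtain ⟨i, hi⟩ := hx
  obtain ⟨k, hk⟩ := heven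
  have hk' : (orderOf (π.cycleOf x) : ℤ) = k + k := mod_cast hk
  obtain ⟨c, hc⟩ := orderOf_cycleOf_dvd_of_mul_self_eq_zpow h (hw.trans (zpow_zero π).symm) hi
  rw [hk'] at hc
  have hik : i = k * c := by linarith
  rw [halfTurn_apply, if_pos (.refl π x), hk, ← hi, ← two_mul, Nat.mul_div_cancel_left k two_pos]
  obtain ⟨d, rfl | rfl⟩ := Int.even_or_odd' c
  · left
    rw [zpow_apply_eq_self_iff_orderOf_cycleOf_dvd, hk']
    exact ⟨d, by rw [hik]; ring⟩
  · right
    have hi' : i = k + (k + k) * d := by rw [hik]; ring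
    rw [hi', zpow_add, Perm.mul_apply, zpow_natCast,
      (zpow_apply_eq_self_iff_orderOf_cycleOf_dvd π x _).2 (hk' ▸ dvd_mul_right _ _)]

end HalfTurn

section Cancellation

variable {α : Type*} [Fintype α] [DecidableEq α] {π w : Perm α} {x : α}

theorem restrictSupport_mul_halfTurn (h : Commute π w) (h' : Commute π (w * halfTurn π x))
    (heven : Even (orderOf (π.cycleOf x))) (hx : w x = x) :
    restrictSupport h' = restrictSupport h * π.cycleOf x := by
  ext z
  rw [restrictSupport_apply, Perm.mul_apply, Perm.mul_apply, restrictSupport_apply]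
  by_cases hz : π.SameCycle x z
  · have hwz : w z = z := by
      obtain ⟨i, rfl⟩ := hz
      exact (apply_apply_eq_iff_of_commute (h.zpow_left i) x).2 hx
    have hturn : halfTurn π x = halfTurn π z := by rw [halfTurn, halfTurn, hz.cycleOf_eq]
    have hturn_ne : halfTurn π x z ≠ z := by
      rw [hturn]
      exact halfTurn_apply_self_ne (by rwa [← hz.cycleOf_eq])
    have hcomm : w (halfTurn π x z) = halfTurn π x (w z) :=
      DFunLike.congr_fun (commute_halfTurn h (hx.symm ▸ .refl π x)).eq z
    rw [hcomm, hwz, if_neg hturn_ne, hz.cycleOf_apply,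
      if_pos ((apply_apply_eq_iff_of_commute h z).2 hwz)]
  · rw [halfTurn_apply, if_neg hz, Perm.cycleOf_apply_of_not_sameCycle hz]

theorem sign_restrictSupport_mul_halfTurn (h : Commute π w) (h' : Commute π (w * halfTurn π x))
    (hw : w * w = 1) (hx : π.SameCycle x (w x)) (heven : Even (orderOf (π.cycleOf x))) :
    Perm.sign (restrictSupport h') = -Perm.sign (restrictSupport h) := by
  rcases apply_eq_self_or_eq_halfTurn h hw hx heven with hwx | hwx
  · rw [restrictSupport_mul_halfTurn h h' heven hwx, Perm.sign_mul,
      sign_cycleOf_of_even_orderOf heven, mul_neg_one]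
  · have hturn : w * halfTurn π x * halfTurn π x = w := by
      rw [mul_assoc, halfTurn_mul_self heven, mul_one]
    have hfix : (w * halfTurn π x) x = x := by
      rw [Perm.mul_apply, ← hwx, ← Perm.mul_apply, hw, Perm.one_apply]
    have hrestrict := restrictSupport_mul_halfTurn h' (hturn.symm ▸ h) heven hfix
    simp only [hturn] at hrestrict
    rw [hrestrict, Perm.sign_mul, sign_cycleOf_of_even_orderOf heven, mul_neg_one, neg_neg]

/-- The points on the even cycles of `π` that `w` maps to themselves. -/
noncomputable def evenStablePoints (π w : Perm α) : Finset α :=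
  {x | π.SameCycle x (w x) ∧ Even (orderOf (π.cycleOf x))}

theorem mem_evenStablePoints :
    x ∈ evenStablePoints π w ↔ π.SameCycle x (w x) ∧ Even (orderOf (π.cycleOf x)) :=
  Finset.mem_filter_univ x

theorem evenStablePoints_mul_halfTurn (h : Commute π w) (x : α) :
    evenStablePoints π (w * halfTurn π x) = evenStablePoints π w := by
  ext z
  have hz : π.SameCycle (w z) (w (halfTurn π x z)) :=
    (sameCycle_apply_apply_of_commute h).2 (sameCycle_halfTurn π x z)
  rw [mem_evenStablePoints, mem_evenStablePoints, Perm.mul_apply]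
  exact and_congr_left' ⟨fun hwz => hwz.trans hz.symm, fun hwz => hwz.trans hz⟩

/-- The involutions that commute with `π`. -/
def commutingInvolutions (π : Perm α) : Finset (Perm α) :=
  {w | w * w = 1 ∧ π * w = w * π}

theorem mem_commutingInvolutions :
    w ∈ commutingInvolutions π ↔ w * w = 1 ∧ Commute π w :=
  Finset.mem_filter_univ w

theorem mul_halfTurn_mem_commutingInvolutions (hw : w ∈ commutingInvolutions π)
    (hx : x ∈ evenStablePoints π w) : w * halfTurn π x ∈ commutingInvolutions π := by
  obtain ⟨hww, h⟩ := mem_commutingInvolutions.1 hw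
  obtain ⟨hxw, heven⟩ := mem_evenStablePoints.1 hx
  have hturn : Commute π (halfTurn π x) :=
    commute_halfTurn rfl (π.sameCycle_apply_right.2 (.refl π x))
  refine mem_commutingInvolutions.2 ⟨?_, h.mul_right hturn⟩
  rw [(commute_halfTurn h hxw).symm.mul_mul_mul_comm, hww, halfTurn_mul_self heven, mul_one]

end Cancellation

section SignedSum

variable {n : ℕ}

theorem neg_one_pow_invw_mul_halfTurn {π w : Perm (Fin n)} {x : Fin n}
    (hw : w ∈ commutingInvolutions π) (hx : x ∈ evenStablePoints π w) :
    (-1 : ℤ) ^ invw n (w * halfTurn π x) π = -(-1) ^ invw n w π := by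
  obtain ⟨hww, h⟩ := mem_commutingInvolutions.1 hw
  obtain ⟨hww', h'⟩ := mem_commutingInvolutions.1 (mul_halfTurn_mem_commutingInvolutions hw hx)
  obtain ⟨hxw, heven⟩ := mem_evenStablePoints.1 hx
  have hunits : (-1 : ℤˣ) ^ invw n (w * halfTurn π x) π = -(-1) ^ invw n w π := by
    rw [neg_one_pow_invw h' hww', neg_one_pow_invw h hww,
      sign_restrictSupport_mul_halfTurn h h' hww hxw heven]
  simpa using congrArg Units.val hunits

theorem sum_filter_evenStablePoints_eq_zero (π : Perm (Fin n)) {s : Finset (Fin n)}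
    (hs : s.Nonempty) :
    ∑ w ∈ commutingInvolutions π with evenStablePoints π w = s,
      (-1 : ℤ) ^ invw n w π = 0 := by
  obtain ⟨x, hx⟩ := hs
  refine Finset.sum_involution (fun w _ => w * halfTurn π x) (fun w hw => ?_)
    (fun w hw _ hfix => ?_) (fun w hw => ?_) fun w hw => ?_
  all_goals
    obtain ⟨hcomm, hs⟩ := Finset.mem_filter.1 hw
    have hxw : x ∈ evenStablePoints π w := hs ▸ hx
    have heven : Even (orderOf (π.cycleOf x)) := (mem_evenStablePoints.1 hxw).2
  · rw [neg_one_pow_invw_mul_halfTurn hcomm hxw, add_neg_cancel]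
  · exact halfTurn_apply_self_ne heven (DFunLike.congr_fun (mul_eq_left.1 hfix) x)
  · exact Finset.mem_filter.2 ⟨mul_halfTurn_mem_commutingInvolutions hcomm hxw,
      (evenStablePoints_mul_halfTurn (mem_commutingInvolutions.1 hcomm).2 x).trans hs⟩
  · rw [mul_assoc, halfTurn_mul_self heven, mul_one]

theorem sum_commutingInvolutions_eq_sum_evenStablePoints_empty (π : Perm (Fin n)) :
    ∑ w ∈ commutingInvolutions π, (-1 : ℤ) ^ invw n w π =
      ∑ w ∈ commutingInvolutions π with evenStablePoints π w = ∅,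
        (-1 : ℤ) ^ invw n w π := by
  rw [← Finset.sum_fiberwise _ (evenStablePoints π)]
  exact Finset.sum_eq_single ∅
    (fun s _ hs => sum_filter_evenStablePoints_eq_zero π (Finset.nonempty_iff_ne_empty.2 hs))
    fun h => absurd (Finset.mem_univ _) h

end SignedSum

theorem commute_of_mul_self_eq {M : Type*} [Semigroup M] {a b : M} (h : b * b = a) :
    Commute a b :=
  h ▸ (Commute.refl b).mul_left (.refl b)

section Twist

variable {α : Type*} [Finite α] {π f : Perm α} {x z : α}

/-- A numbering of the cycles of `π`. -/
noncomputable def cycleIndex (π : Perm α) (x : α) :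
    Fin (Nat.card (Quotient (Perm.SameCycle.setoid π))) :=
  Finite.equivFin _ ⟦x⟧

theorem cycleIndex_eq_iff : cycleIndex π x = cycleIndex π z ↔ π.SameCycle x z :=
  (Finite.equivFin _).apply_eq_iff_eq.trans Quotient.eq

theorem cycleIndex_zpow_apply (π : Perm α) (i : ℤ) (x : α) :
    cycleIndex π ((π ^ i) x) = cycleIndex π x :=
  cycleIndex_eq_iff.2 (Perm.sameCycle_zpow_left.2 (.refl π x))

theorem cycleIndex_apply_apply_eq_iff (h : Commute π f) :
    cycleIndex π (f x) = cycleIndex π (f z) ↔ cycleIndex π x = cycleIndex π z := by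
  rw [cycleIndex_eq_iff, cycleIndex_eq_iff, sameCycle_apply_apply_of_commute h]

/-- The map underlying `twist`. -/
noncomputable def twistFun (π f : Perm α) (i j : ℤ) (z : α) : α :=
  if cycleIndex π z = cycleIndex π (f z) then (π ^ i) z
  else if cycleIndex π z < cycleIndex π (f z) then f z
  else (π ^ j) (f z)

theorem cycleIndex_twistFun (π f : Perm α) (i j : ℤ) (z : α) :
    cycleIndex π (twistFun π f i j z) = cycleIndex π (f z) := by
  unfold twistFun
  split_ifs with h
  · rw [cycleIndex_zpow_apply, h]
  · rfl
  · rw [cycleIndex_zpow_apply]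

theorem twistFun_injective (h : Commute π f) (i j : ℤ) :
    Function.Injective (twistFun π f i j) := by
  intro x z hxz
  have hf : cycleIndex π (f x) = cycleIndex π (f z) := by
    rw [← cycleIndex_twistFun π f i j, hxz, cycleIndex_twistFun]
  have hindex : cycleIndex π x = cycleIndex π z := (cycleIndex_apply_apply_eq_iff h).1 hf
  unfold twistFun at hxz
  rw [hf, hindex] at hxz
  split_ifs at hxz <;> simpa only [EmbeddingLike.apply_eq_iff_eq] using hxz

/-- For `f` commuting with `π`, the permutation that acts as `π ^ i` on the cycles of `π` stable
under `f`, and on every other cycle as `f` or as `π ^ j * f`, according to whether `f` raises or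
lowers the index of the cycle. -/
noncomputable def twist (h : Commute π f) (i j : ℤ) : Perm α :=
  Equiv.ofBijective _ (Finite.injective_iff_bijective.1 (twistFun_injective h i j))

theorem twist_apply (h : Commute π f) (i j : ℤ) (z : α) :
    twist h i j z =
      if cycleIndex π z = cycleIndex π (f z) then (π ^ i) z
      else if cycleIndex π z < cycleIndex π (f z) then f z
      else (π ^ j) (f z) :=
  rfl

theorem cycleIndex_twist (h : Commute π f) (i j : ℤ) (z : α) :
    cycleIndex π (twist h i j z) = cycleIndex π (f z) :=
  cycleIndex_twistFun π f i j z

theorem commute_twist (h : Commute π f) (i j : ℤ) : Commute π (twist h i j) := by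
  refine Equiv.ext fun z => ?_
  have hf : f (π z) = π (f z) := DFunLike.congr_fun h.eq.symm z
  have hzpow (k : ℤ) (y : α) : (π ^ k) (π y) = π ((π ^ k) y) :=
    DFunLike.congr_fun (Commute.zpow_self π k).eq y
  have hindex (y : α) : cycleIndex π (π y) = cycleIndex π y := cycleIndex_zpow_apply π 1 y
  simp only [Perm.mul_apply, twist_apply, hf, hindex, hzpow, apply_ite π]

theorem twist_mul_self_apply {k : ℤ} (h : Commute π f) (hff : f * f = π ^ k) (i j : ℤ) (z : α) :
    (twist h i j * twist h i j) z =
      if cycleIndex π z = cycleIndex π (f z) then (π ^ (i + i)) z else (π ^ (j + k)) z := by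
  have hffz : f (f z) = (π ^ k) z := DFunLike.congr_fun hff z
  have hfpow (l : ℤ) (y : α) : f ((π ^ l) y) = (π ^ l) (f y) :=
    DFunLike.congr_fun (h.zpow_left l).eq.symm y
  rw [Perm.mul_apply, twist_apply h i j z]
  split_ifs with hz hlt
  · rw [twist_apply, hfpow, cycleIndex_zpow_apply, cycleIndex_zpow_apply, if_pos hz, zpow_add,
      Perm.mul_apply]
  · rw [twist_apply, hffz, cycleIndex_zpow_apply, if_neg (Ne.symm hz), if_neg hlt.not_gt, zpow_add,
      Perm.mul_apply]
  · rw [twist_apply, hfpow, cycleIndex_zpow_apply, hffz, cycleIndex_zpow_apply,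
      cycleIndex_zpow_apply, if_neg (Ne.symm hz),
      if_pos (lt_of_le_of_ne (not_lt.1 hlt) (Ne.symm hz)), zpow_add, Perm.mul_apply]

theorem twist_mul_self_eq_one (h : Commute π f) (hff : f * f = π) :
    twist h 0 (-1) * twist h 0 (-1) = 1 := by
  ext z
  rw [twist_mul_self_apply h (hff.trans (zpow_one π).symm), neg_add_cancel, add_zero, ite_self,
    zpow_zero]

theorem twist_twist {i j i' j' : ℤ} (h : Commute π f) (h' : Commute π (twist h i j))
    (hi' : ∀ z, cycleIndex π z = cycleIndex π (f z) → (π ^ i') z = f z) (hj' : j' + j = 0) :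
    twist h' i' j' = f := by
  ext z
  rw [twist_apply, cycleIndex_twist, twist_apply]
  split_ifs with hz hlt
  · exact hi' z hz
  · rfl
  · rw [← Perm.mul_apply, ← zpow_add, hj', zpow_zero, Perm.one_apply]

end Twist

section SquareRoots

variable {α : Type*} [Fintype α] [DecidableEq α] {π f : Perm α} {z : α}

theorem zpow_apply_eq_of_odd_orderOf_cycleOf {k i : ℤ} (h : Commute π f) (hff : f * f = π ^ k)
    (hz : π.SameCycle z (f z)) (hodd : Odd (orderOf (π.cycleOf z)))
    (hi : (π ^ (i + i)) z = (π ^ k) z) : (π ^ i) z = f z := by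
  obtain ⟨l, hl⟩ := hz
  have hdvd := orderOf_cycleOf_dvd_of_mul_self_eq_zpow h hff hl
  have hdvd_sub : (orderOf (π.cycleOf z) : ℤ) ∣ 2 * (i - l) := by
    rw [show 2 * (i - l) = (i + i - k) - (l + l - k) by ring]
    exact dvd_sub ((zpow_apply_eq_zpow_apply_iff π z _ _).1 hi) hdvd
  have hcoprime : IsCoprime (orderOf (π.cycleOf z) : ℤ) 2 :=
    Nat.isCoprime_iff_coprime.2 hodd.coprime_two_right
  rw [← hl, zpow_apply_eq_zpow_apply_iff]
  exact hcoprime.dvd_of_dvd_mul_left hdvd_sub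

theorem exists_zpow_add_self_apply_eq_apply (π : Perm α) :
    ∃ i : ℤ, ∀ z, Odd (orderOf (π.cycleOf z)) → (π ^ (i + i)) z = π z := by
  obtain ⟨a, m, ⟨c, rfl⟩, hm⟩ := Nat.exists_eq_two_pow_mul_odd (orderOf_pos π).ne'
  refine ⟨c + 1, fun z hodd => ?_⟩
  have hdvd : orderOf (π.cycleOf z) ∣ 2 * c + 1 :=
    (hodd.coprime_two_right.pow_right a).dvd_of_dvd_mul_left (hm ▸ π.orderOf_cycleOf_dvd_orderOf z)
  have hsub : (c + 1 + (c + 1) : ℤ) - 1 = (2 * c + 1 : ℕ) := by push_cast; ring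
  refine ((zpow_apply_eq_zpow_apply_iff π z _ 1).2 ?_).trans (by rw [zpow_one])
  rw [hsub]
  exact_mod_cast hdvd

theorem odd_orderOf_cycleOf_of_mul_self_eq {σ : Perm α} (hσ : σ * σ = π)
    (hz : π.SameCycle z (σ z)) : Odd (orderOf (π.cycleOf z)) := by
  obtain ⟨i, hi⟩ := hz
  have hdvd := orderOf_cycleOf_dvd_of_mul_self_eq_zpow (commute_of_mul_self_eq hσ)
    (hσ.trans (zpow_one π).symm) hi
  rw [← Nat.not_even_iff_odd, ← Int.even_coe_nat]
  exact fun heven => Int.not_even_iff_odd.2 ⟨i - 1, by ring⟩ (heven.trans_dvd hdvd)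

theorem odd_orderOf_cycleOf_of_evenStablePoints_eq_empty (hf : evenStablePoints π f = ∅)
    (hz : π.SameCycle z (f z)) : Odd (orderOf (π.cycleOf z)) :=
  Nat.not_even_iff_odd.1 fun heven =>
    Finset.eq_empty_iff_forall_notMem.1 hf z (mem_evenStablePoints.2 ⟨hz, heven⟩)

theorem apply_eq_self_of_evenStablePoints_eq_empty (h : Commute π f) (hff : f * f = 1)
    (hf : evenStablePoints π f = ∅) (hz : π.SameCycle z (f z)) : f z = z :=
  (zpow_apply_eq_of_odd_orderOf_cycleOf (k := 0) (i := 0) h hff hz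
    (odd_orderOf_cycleOf_of_evenStablePoints_eq_empty hf hz) rfl).symm

theorem evenStablePoints_eq_empty_of_mul_self_eq {σ : Perm α} (hσ : σ * σ = π) :
    evenStablePoints π σ = ∅ := by
  refine Finset.eq_empty_of_forall_notMem fun z hz => ?_
  obtain ⟨hz, heven⟩ := mem_evenStablePoints.1 hz
  exact Nat.not_even_iff_odd.2 (odd_orderOf_cycleOf_of_mul_self_eq hσ hz) heven

theorem evenStablePoints_twist (h : Commute π f) (i j : ℤ) :
    evenStablePoints π (twist h i j) = evenStablePoints π f := by
  ext z
  simp only [mem_evenStablePoints, ← cycleIndex_eq_iff, cycleIndex_twist]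

theorem twist_mul_self_eq {N : ℤ}
    (hN : ∀ z, Odd (orderOf (π.cycleOf z)) → (π ^ (N + N)) z = π z) (h : Commute π f)
    (hff : f * f = 1) (hf : evenStablePoints π f = ∅) :
    twist h N 1 * twist h N 1 = π := by
  ext z
  rw [twist_mul_self_apply (k := 0) h hff, add_zero, zpow_one]
  split_ifs with hz
  · exact hN z (odd_orderOf_cycleOf_of_evenStablePoints_eq_empty hf (cycleIndex_eq_iff.1 hz))
  · rfl

theorem card_commutingInvolutions_evenStablePoints_empty (π : Perm α) :
    Finset.card {w ∈ commutingInvolutions π | evenStablePoints π w = ∅} =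
      Finset.card {σ : Perm α | σ * σ = π} := by
  obtain ⟨N, hN⟩ := exists_zpow_add_self_apply_eq_apply π
  have mem_iff (w : Perm α) : w ∈ ({w ∈ commutingInvolutions π | evenStablePoints π w = ∅} :
      Finset _) ↔ (w * w = 1 ∧ Commute π w) ∧ evenStablePoints π w = ∅ := by
    rw [Finset.mem_filter, mem_commutingInvolutions]
  have commute_root {σ : Perm α} (hσ : σ * σ = π) : Commute π σ := commute_of_mul_self_eq hσ
  refine Finset.card_bij' (fun w hw => twist ((mem_iff w).1 hw).1.2 N 1)
    (fun σ hσ => twist (commute_root ((Finset.mem_filter_univ σ).1 hσ)) 0 (-1))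
    (fun w hw => ?_) (fun σ hσ => ?_) (fun w hw => ?_) fun σ hσ => ?_
  · obtain ⟨⟨hww, h⟩, hempty⟩ := (mem_iff w).1 hw
    exact (Finset.mem_filter_univ _).2 (twist_mul_self_eq hN h hww hempty)
  · rw [Finset.mem_filter_univ] at hσ
    have h := commute_root hσ
    exact (mem_iff _).2 ⟨⟨twist_mul_self_eq_one h hσ, commute_twist h 0 (-1)⟩,
      (evenStablePoints_twist h 0 (-1)).trans (evenStablePoints_eq_empty_of_mul_self_eq hσ)⟩
  · obtain ⟨⟨hww, h⟩, hempty⟩ := (mem_iff w).1 hw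
    refine twist_twist h _ (fun z hz => ?_) (neg_add_cancel 1)
    exact (apply_eq_self_of_evenStablePoints_eq_empty h hww hempty (cycleIndex_eq_iff.1 hz)).symm
  · rw [Finset.mem_filter_univ] at hσ
    have h := commute_root hσ
    refine twist_twist h _ (fun z hz => ?_) (add_neg_cancel 1)
    have hz := cycleIndex_eq_iff.1 hz
    have hodd := odd_orderOf_cycleOf_of_mul_self_eq hσ hz
    have hσ' : σ * σ = π ^ (1 : ℤ) := hσ.trans (zpow_one π).symm
    exact zpow_apply_eq_of_odd_orderOf_cycleOf h hσ' hz hodd (hN z hodd)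

end SquareRoots

theorem neg_one_pow_invw_of_evenStablePoints_eq_empty {n : ℕ} {π w : Perm (Fin n)}
    (h : Commute π w) (hw : w * w = 1) (hempty : evenStablePoints π w = ∅) :
    (-1 : ℤ) ^ invw n w π = 1 := by
  have hww (z) : w (w z) = z := DFunLike.congr_fun hw z
  have hcomm (z) : w (π z) = π (w z) := DFunLike.congr_fun h.eq.symm z
  have hindex (z) : cycleIndex π (π z) = cycleIndex π z := cycleIndex_zpow_apply π 1 z
  suffices hunits : (-1 : ℤˣ) ^ invw n w π = 1 by simpa using congrArg Units.val hunits
  rw [neg_one_pow_invw h hw, sign_restrictSupport_eq_neg_one_pow h hw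
    (fun z => cycleIndex π z < cycleIndex π (w z)) fun z hz => ?_]
  · rw [Finset.filter_false_of_mem, Finset.card_empty, pow_zero]
    rintro z - ⟨-, hlt, hnlt⟩
    rw [hcomm, hindex, hindex] at hnlt
    exact hnlt hlt
  · have hne : cycleIndex π (w z) ≠ cycleIndex π z := fun heq =>
      hz (apply_eq_self_of_evenStablePoints_eq_empty h hw hempty (cycleIndex_eq_iff.1 heq.symm))
    rw [hww, not_lt, hne.le_iff_lt]

theorem sum_commutingInvolutions_neg_one_pow_invw {n : ℕ} (π : Perm (Fin n)) :
    ∑ w ∈ commutingInvolutions π, (-1 : ℤ) ^ invw n w π = Finset.card {σ | σ * σ = π} := by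
  rw [sum_commutingInvolutions_eq_sum_evenStablePoints_empty,
    ← card_commutingInvolutions_evenStablePoints_empty, Finset.card_eq_sum_ones, Nat.cast_sum]
  refine Finset.sum_congr rfl fun w hw => ?_
  obtain ⟨hw, hempty⟩ := Finset.mem_filter.1 hw
  obtain ⟨hww, h⟩ := mem_commutingInvolutions.1 hw
  rw [neg_one_pow_invw_of_evenStablePoints_eq_empty h hww hempty, Nat.cast_one]

section InvertingPerm

variable {α : Type*}

theorem mul_swap_mul_eq_inv_mul [DecidableEq α] {x y : α} {σ h : Perm α} (hx : h x = x)
    (hy : h y = y) (hσ : h * σ = σ⁻¹ * h) :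
    σ⁻¹ * h * (swap x y * σ) = (swap x y * σ)⁻¹ * (σ⁻¹ * h) := by
  have hswap : h * swap x y = swap x y * h := by rw [mul_swap_eq_swap_mul, hx, hy]
  calc σ⁻¹ * h * (swap x y * σ) = σ⁻¹ * (h * swap x y) * σ := by group
    _ = σ⁻¹ * swap x y * (h * σ) := by rw [hswap]; group
    _ = σ⁻¹ * (swap x y)⁻¹ * (σ⁻¹ * h) := by rw [hσ, swap_inv]
    _ = (swap x y * σ)⁻¹ * (σ⁻¹ * h) := by rw [mul_inv_rev]

-- If `h` inverts `σ = swap x (π x) * π` and fixes `x` and `π x`, then `σ⁻¹ * h` inverts `π`.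
theorem exists_inverting_perm_fixing [Finite α] (π : Perm α) (x : α) :
    ∃ h : Perm α, h x = x ∧ (∀ z, π z = z → h z = z) ∧ h * π = π⁻¹ * h := by
  classical
  cases nonempty_fintype α
  induction hd : π.support.card using Nat.strong_induction_on generalizing π x with
  | _ d ih =>
  subst hd
  have of_moved (x) (hx : π x ≠ x) :
      ∃ h : Perm α, h x = x ∧ (∀ z, π z = z → h z = z) ∧ h * π = π⁻¹ * h := by
    obtain ⟨σ, hσ⟩ : ∃ σ, σ = swap x (π x) * π := ⟨_, rfl⟩
    obtain ⟨h, hfix, hsupp, hconj⟩ := ih _ (hσ ▸ Perm.card_support_swap_mul hx) σ (π x) rfl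
    have hπ : π = swap x (π x) * σ := by rw [hσ, swap_mul_self_mul]
    have hσx : σ x = x := by rw [hσ, Perm.mul_apply, swap_apply_right]
    refine ⟨σ⁻¹ * h, ?_, fun z hz => ?_, ?_⟩
    · rw [Perm.mul_apply, hsupp x hσx, Perm.inv_eq_iff_eq, hσx]
    · have hzx : z ≠ x := fun hzx => hx (hzx ▸ hz)
      have hzy : z ≠ π x := fun hzy => hzx (π.injective (hz.trans hzy))
      have hσz : σ z = z := by rw [hσ, Perm.mul_apply, hz, swap_apply_of_ne_of_ne hzx hzy]
      rw [Perm.mul_apply, hsupp z hσz, Perm.inv_eq_iff_eq, hσz]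
    · have hinverts := mul_swap_mul_eq_inv_mul (hsupp x hσx) hfix hconj
      rwa [← hπ] at hinverts
  by_cases hx : π x = x
  · rcases eq_or_ne π 1 with rfl | hπ
    · exact ⟨1, rfl, fun _ _ => rfl, rfl⟩
    · obtain ⟨y, hy⟩ : ∃ y, π y ≠ y := not_forall.1 fun h => hπ (Perm.ext h)
      obtain ⟨h, -, hsupp, hconj⟩ := of_moved y hy
      exact ⟨h, hsupp x hx, hsupp, hconj⟩
  · exact of_moved x hx

end InvertingPerm

section Characters

open Module Representation

variable {k G U : Type*} [Field k] [Group G] [AddCommGroup U] [Module k U]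

theorem character_inv_of_isConj (ρ : Representation k G U) {g : G} (h : IsConj g g⁻¹) :
    ρ.character g⁻¹ = ρ.character g := by
  obtain ⟨c, hc⟩ := isConj_iff.1 h
  rw [← hc, char_conj]

variable [FiniteDimensional k U] [IsAlgClosed k]

-- The commutant of an irreducible representation consists of scalars, so this is the density
-- theorem.
theorem span_range_eq_top_of_isIrreducible (ρ : Representation k G U) [ρ.IsIrreducible] :
    Submodule.span k (Set.range ρ) = ⊤ := by
  classical
  refine eq_top_iff.2 fun T _ => ?_
  have hscalar : Function.Surjective (algebraMap k (End (MonoidAlgebra k G) ρ.asModule)) :=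
    (IsSimpleModule.algebraMap_end_bijective_of_isAlgClosed k).surjective
  let f : End (End (MonoidAlgebra k G) ρ.asModule) ρ.asModule :=
    { toFun := fun v => ρ.asModuleEquiv.symm (T (ρ.asModuleEquiv v))
      map_add' := fun v w => by simp only [map_add]
      map_smul' := fun a v => by
        obtain ⟨c, rfl⟩ := hscalar a
        simp }
  let b := finBasis k U
  obtain ⟨r, hr⟩ := jacobson_density f (Finset.univ.image fun i => ρ.asModuleEquiv.symm (b i))
  have hT : T = ρ.asAlgebraHom r := b.ext fun i =>
    congrArg ρ.asModuleEquiv (hr _ (Finset.mem_image_of_mem _ (Finset.mem_univ i)))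
  rw [hT, asAlgebraHom_def, MonoidAlgebra.lift_apply]
  exact Submodule.sum_mem _ fun g _ =>
    Submodule.smul_mem _ _ (Submodule.subset_span (Set.mem_range_self g))

variable [CharZero k] [Finite G]

theorem finrank_intertwiningMap_dual
    (ρ : Representation k G U) [ρ.IsIrreducible] (hinv : ∀ g : G, IsConj g g⁻¹) :
    finrank k (IntertwiningMap ρ ρ.dual) = 1 := by
  cases nonempty_fintype G
  have : Invertible (Nat.card G : k) := invertibleOfNonzero (by simp)
  have hdual := card_inv_mul_sum_char_mul_char_eq_finrank ρ ρ.dual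
  have hself := card_inv_mul_sum_char_mul_char_eq_finrank ρ ρ
  simp only [IsIrreducible.finrank_intertwiningMap_self, char_dual,
    fun g => character_inv_of_isConj ρ (hinv g)] at hdual hself
  exact_mod_cast hdual.symm.trans hself

end Characters

section InvariantForms

set_option maxSynthPendingDepth 3

open Module Representation
open LinearMap (BilinForm)

universe u

variable {k G : Type*} [Field k] [Group G]

/-- The bilinear form `B` is invariant under the representation `ρ`. -/
def IsInvariantForm {U : Type*} [AddCommGroup U] [Module k U] (ρ : Representation k G U)
    (B : BilinForm k U) : Prop :=
  ∀ g x y, B (ρ g x) (ρ g y) = B x y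

/-- The representation of `G` on bilinear forms, as a special case of `linHom`. -/
abbrev bilinFormRep {U : Type*} [AddCommGroup U] [Module k U] (ρ : Representation k G U) :
    Representation k G (BilinForm k U) :=
  linHom ρ ρ.dual

/-- Every nonzero finite-dimensional representation of `G` over `k` carries a nonzero invariant
symmetric bilinear form. -/
def HasInvariantSymmForms (k G : Type*) [Field k] [Group G] : Prop :=
  ∀ (U : Type u) [AddCommGroup U] [Module k U] [FiniteDimensional k U] [Nontrivial U]
    (ρ : Representation k G U), ∃ B : BilinForm k U, B ≠ 0 ∧ B.IsSymm ∧ IsInvariantForm ρ B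

section

variable {U : Type*} [AddCommGroup U] [Module k U] {ρ : Representation k G U} {B : BilinForm k U}

theorem bilinFormRep_apply (ρ : Representation k G U) (g : G) (B : BilinForm k U) (x y : U) :
    bilinFormRep ρ g B x y = B (ρ g⁻¹ x) (ρ g⁻¹ y) := by
  simp only [linHom_apply, dual_apply, LinearMap.comp_apply, Dual.transpose_apply]

theorem mem_invariants_bilinFormRep :
    B ∈ (bilinFormRep ρ).invariants ↔ IsInvariantForm ρ B := by
  simp only [mem_invariants, LinearMap.ext_iff, bilinFormRep_apply]
  exact ⟨fun h g x y => by simpa using h g⁻¹ x y, fun h g x y => h g⁻¹ x y⟩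

theorem IsInvariantForm.apply_left (hB : IsInvariantForm ρ B) (g : G) (x y : U) :
    B (ρ g x) y = B x (ρ g⁻¹ y) := by
  rw [← hB g x, self_inv_apply]

variable [FiniteDimensional k U] [IsAlgClosed k]

theorem finrank_invariants_bilinFormRep [CharZero k] [Finite G]
    (ρ : Representation k G U) [ρ.IsIrreducible] (hinv : ∀ g : G, IsConj g g⁻¹) :
    finrank k (bilinFormRep ρ).invariants = 1 := by
  rw [(invariantsEquivIntertwiningMap ρ ρ.dual).finrank_eq, finrank_intertwiningMap_dual ρ hinv]

theorem exists_injective_isInvariantForm [CharZero k] [Finite G]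
    (ρ : Representation k G U) [ρ.IsIrreducible] (hinv : ∀ g : G, IsConj g g⁻¹) :
    ∃ B : BilinForm k U, Function.Injective B ∧ IsInvariantForm ρ B := by
  obtain ⟨f, hf, -⟩ := finrank_eq_one_iff'.1 (finrank_intertwiningMap_dual ρ hinv)
  exact ⟨f.toLinearMap, (IsIrreducible.injective_or_eq_zero f).resolve_right hf,
    mem_invariants_bilinFormRep.1 ((invariantsEquivIntertwiningMap ρ ρ.dual).symm f).2⟩

variable [ρ.IsIrreducible]

-- For `T = ρ g`, the summands on the two sides match after translating by some `c : K` that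
-- conjugates `g` to `g⁻¹`; these `T` span all operators.
theorem IsInvariantForm.sum_apply_comm {K : Type*} [Group K] [Fintype K] {ι : K →* G}
    (hι : ∀ g, ∃ c, ι c * g * (ι c)⁻¹ = g⁻¹) (hB : IsInvariantForm ρ B) (T : U →ₗ[k] U) (x y : U) :
    ∑ c : K, B (T (ρ (ι c) x)) (ρ (ι c) y) = ∑ c : K, B (ρ (ι c) x) (T (ρ (ι c) y)) := by
  have hT : T ∈ Submodule.span k (Set.range ρ) := by
    rw [span_range_eq_top_of_isIrreducible]
    trivial
  induction hT using Submodule.span_induction with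
  | zero => simp only [LinearMap.zero_apply, map_zero]
  | add S T _ _ hS hT => simp only [LinearMap.add_apply, map_add, Finset.sum_add_distrib, hS, hT]
  | smul a T _ hT =>
    simp only [LinearMap.smul_apply, map_smul, smul_eq_mul, ← Finset.mul_sum, hT]
  | mem T hT =>
    obtain ⟨g, rfl⟩ := hT
    obtain ⟨c₀, hc₀⟩ := hι g
    have hleft (a : G) : B (ρ g (ρ a x)) (ρ a y) = B x (ρ (a⁻¹ * g⁻¹ * a) y) := by
      simp only [hB.apply_left, map_mul, End.mul_apply]
    have hright (a : G) : B (ρ a x) (ρ g (ρ a y)) = B x (ρ (a⁻¹ * g * a) y) := by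
      simp only [hB.apply_left, map_mul, End.mul_apply]
    rw [← Equiv.sum_comp (Equiv.mulLeft c₀)]
    refine Finset.sum_congr rfl fun c _ => ?_
    have hconj : (ι (c₀ * c))⁻¹ * g⁻¹ * ι (c₀ * c) = (ι c)⁻¹ * g * ι c := by
      rw [← hc₀, map_mul]
      group
    rw [hleft, hright, Equiv.coe_mulLeft, hconj]

variable [CharZero k]

theorem IsInvariantForm.apply_comm {K : Type*} [Group K] [Finite K] {ι : K →* G}
    (hι : ∀ g, ∃ c, ι c * g * (ι c)⁻¹ = g⁻¹) (hB : IsInvariantForm ρ B) {T : U →ₗ[k] U}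
    (hT : ∀ c, Commute T (ρ (ι c))) (x y : U) : B (T x) y = B x (T y) := by
  cases nonempty_fintype K
  have hTρ (c : K) (z : U) : T (ρ (ι c) z) = ρ (ι c) (T z) := DFunLike.congr_fun (hT c).eq z
  have hsum := hB.sum_apply_comm hι T x y
  simp only [hTρ, hB (ι _), Finset.sum_const, Finset.card_univ, nsmul_eq_mul] at hsum
  exact mul_left_cancel₀ (Nat.cast_ne_zero.2 Fintype.card_ne_zero) hsum

theorem IsInvariantForm.not_isAlt {K : Type*} [Group K] [Finite K] {ι : K →* G}
    (hι : ∀ g, ∃ c, ι c * g * (ι c)⁻¹ = g⁻¹) (hB : IsInvariantForm ρ B)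
    (hinj : Function.Injective B) {C : BilinForm k U} (hC0 : C ≠ 0) (hC : C.IsSymm)
    (hCι : IsInvariantForm (ρ.comp ι) C) : ¬ B.IsAlt := by
  intro halt
  let e : U ≃ₗ[k] Dual k U :=
    LinearEquiv.ofInjectiveOfFinrankEq B hinj Subspace.dual_finrank_eq.symm
  let A : U →ₗ[k] U := e.symm.toLinearMap ∘ₗ C
  have hA (x y : U) : B (A x) y = C x y := DFunLike.congr_fun (e.apply_symm_apply (C x)) y
  have hAι (c : K) : Commute A (ρ (ι c)) := by
    refine LinearMap.ext fun x => hinj (LinearMap.ext fun y => ?_)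
    rw [End.mul_apply, End.mul_apply, hA, hB.apply_left, hA, ← map_inv]
    exact hCι.apply_left c x y
  refine hC0 (LinearMap.ext₂ fun x y => self_eq_neg.1 ?_)
  calc C x y = B x (A y) := by rw [← hA, hB.apply_comm hι hAι]
    _ = -C x y := by rw [← halt.neg_eq, hA, hC.eq]

end

theorem exists_subrepresentation_ne_bot_ne_top {U : Type*} [AddCommGroup U] [Module k U]
    [Nontrivial U] {ρ : Representation k G U} (hρ : ¬ ρ.IsIrreducible) :
    ∃ W : Subrepresentation ρ, W.toSubmodule ≠ ⊥ ∧ W.toSubmodule ≠ ⊤ := by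
  have : Nontrivial (Subrepresentation ρ) :=
    ⟨⊥, ⊤, fun h => bot_ne_top (congrArg Subrepresentation.toSubmodule h)⟩
  contrapose! hρ
  refine { eq_bot_or_eq_top := fun W => or_iff_not_imp_left.2 fun hW => ?_ }
  exact Subrepresentation.toSubmodule_injective
    (hρ W fun h => hW (Subrepresentation.toSubmodule_injective h))

namespace HasInvariantSymmForms

theorem of_subsingleton (k G : Type*) [Field k] [Group G] [Subsingleton G] :
    HasInvariantSymmForms.{u} k G := by
  intro U _ _ _ _ ρ
  obtain ⟨v, hv⟩ := exists_ne (0 : U)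
  obtain ⟨φ, hφ⟩ := Module.Projective.exists_dual_ne_zero k hv
  refine ⟨(LinearMap.mul k k).compl₁₂ φ φ, fun h => hφ ?_, ⟨fun x y => mul_comm _ _⟩,
    fun g x y => ?_⟩
  · exact mul_self_eq_zero.1 (LinearMap.congr_fun₂ h v v)
  · rw [Subsingleton.elim g 1, map_one, End.one_apply, End.one_apply]

theorem of_irreducible
    (h : ∀ (U : Type u) [AddCommGroup U] [Module k U] [FiniteDimensional k U]
      (ρ : Representation k G U) [ρ.IsIrreducible],
      ∃ B : BilinForm k U, B ≠ 0 ∧ B.IsSymm ∧ IsInvariantForm ρ B) :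
    HasInvariantSymmForms.{u} k G := by
  intro U _ _ _ _ ρ
  induction hd : finrank k U using Nat.strong_induction_on generalizing U with
  | _ d ih =>
  by_cases hirr : ρ.IsIrreducible
  · exact h U ρ
  obtain ⟨W, hbot, htop⟩ := exists_subrepresentation_ne_bot_ne_top hirr
  have : Nontrivial (U ⧸ W.toSubmodule) := Submodule.Quotient.nontrivial_iff.2 htop
  have hlt : finrank k (U ⧸ W.toSubmodule) < d := by
    have := Submodule.one_le_finrank_iff.2 hbot
    have := W.toSubmodule.finrank_quotient_add_finrank
    lia
  let π := W.toSubmodule.mkQ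
  obtain ⟨B, hB0, hBsymm, hB⟩ := ih _ hlt (U ⧸ W.toSubmodule)
    (ρ.quotient W.toSubmodule fun g _ hv => W.apply_mem_toSubmodule g hv) rfl
  refine ⟨B.compl₁₂ π π, fun h0 => hB0 ?_, ⟨fun x y => hBsymm.eq _ _⟩,
    fun g x y => hB g (π x) (π y)⟩
  ext x y
  exact LinearMap.congr_fun₂ h0 x y

theorem of_conj_inv [IsAlgClosed k] [CharZero k] [Finite G] {K : Type*} [Group K] [Finite K]
    {ι : K →* G} (hι : ∀ g, ∃ c, ι c * g * (ι c)⁻¹ = g⁻¹) (hK : HasInvariantSymmForms.{u} k K) :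
    HasInvariantSymmForms.{u} k G := by
  refine .of_irreducible fun U _ _ _ ρ _ => ?_
  have : Nontrivial U := IsSimpleModule.nontrivial (MonoidAlgebra k G) ρ.asModule
  obtain ⟨C, hC0, hC, hCι⟩ := hK U (ρ.comp ι)
  obtain ⟨B, hinj, hB⟩ := exists_injective_isInvariantForm ρ
    fun g => isConj_iff.2 ((hι g).imp' ι fun _ h => h)
  refine ⟨B + B.flip, fun h0 => hB.not_isAlt hι hinj hC0 hC hCι fun x => ?_,
    ⟨fun x y => add_comm _ _⟩, fun g x y => congrArg₂ (· + ·) (hB g x y) (hB g y x)⟩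
  exact add_self_eq_zero.1 (LinearMap.congr_fun₂ h0 x x)

end HasInvariantSymmForms

theorem hasInvariantSymmForms_perm (k : Type*) [Field k] [IsAlgClosed k] [CharZero k]
    (α : Type*) [Finite α] : HasInvariantSymmForms.{u} k (Perm α) := by
  induction hc : Nat.card α generalizing α with
  | zero =>
    have := Finite.card_eq_zero_iff.1 hc
    exact .of_subsingleton k _
  | succ m ih =>
    classical
    obtain ⟨x⟩ : Nonempty α := (Nat.card_pos_iff.1 (hc ▸ m.succ_pos)).1
    refine .of_conj_inv (ι := Perm.ofSubtype (p := (· ≠ x))) (fun π => ?_) (ih {y // y ≠ x} ?_)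
    · obtain ⟨h, hx, -, hh⟩ := exists_inverting_perm_fixing π x
      refine ⟨h.subtypePerm fun y => (h.injective.ne_iff' hx), ?_⟩
      rw [Perm.ofSubtype_subtypePerm, hh, mul_inv_cancel_right]
      exact fun y hy hyx => hy (hyx ▸ hx)
    · cases nonempty_fintype α
      rw [Nat.card_eq_fintype_card] at hc ⊢
      rw [Fintype.card_subtype_compl, Fintype.card_subtype_eq, hc, Nat.add_sub_cancel]

end InvariantForms

section FrobeniusSchur

set_option maxSynthPendingDepth 3

open Module Representation
open LinearMap (BilinForm)

universe u

variable {k G : Type*} [Field k]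

theorem trace_eq_trace_mul_self_of_apply_swap {U : Type*} [AddCommGroup U] [Module k U]
    [FiniteDimensional k U] (a : End k U) (T : End k (BilinForm k U))
    (hT : ∀ B x y, T B x y = B (a y) (a x)) :
    LinearMap.trace k _ T = LinearMap.trace k U (a * a) := by
  classical
  let b := finBasis k U
  let β := (Matrix.stdBasis k _ _).map (LinearMap.BilinForm.toMatrix b).symm
  have hβ (i j x y) : β (i, j) x y = b.repr x i * b.repr y j := by
    rw [Basis.map_apply, Matrix.stdBasis_eq_single, LinearMap.BilinForm.toMatrix_symm,
      Matrix.toBilin_apply]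
    simp [Matrix.single_apply, ite_and]
  have hrepr (B i j) : β.repr B (i, j) = B (b i) (b j) := by
    simp [β, Matrix.stdBasis]
  rw [LinearMap.trace_eq_matrix_trace k β, LinearMap.trace_eq_matrix_trace k b,
    LinearMap.toMatrix_mul, Matrix.trace, Matrix.trace, Fintype.sum_prod_type]
  simp only [Matrix.diag_apply, Matrix.mul_apply, LinearMap.toMatrix_apply, hrepr, hT, hβ]

theorem sum_trace_mul_of_fixes_invariants [CharZero k] [Group G] [Fintype G] {W : Type*}
    [AddCommGroup W] [Module k W] [FiniteDimensional k W] (τ : Representation k G W) (F : End k W)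
    (hF : ∀ w ∈ τ.invariants, F w = w) :
    ∑ g, LinearMap.trace k W (F * τ g) = Fintype.card G * finrank k τ.invariants := by
  have : Invertible (Fintype.card G : k) := invertibleOfNonzero (by simp)
  have hproj : F * τ.averageMap = τ.averageMap :=
    LinearMap.ext fun w => hF _ (τ.averageMap_invariant w)
  have haverage : F * τ.averageMap = (Fintype.card G : k)⁻¹ • ∑ g, F * τ g := by
    simp only [averageMap, GroupAlgebra.average, map_smul, map_sum, asAlgebraHom_of,
      mul_smul_comm, Finset.mul_sum, invOf_eq_inv]
  have htrace := (isProj_averageMap τ).trace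
  rw [← hproj, haverage, map_smul, map_sum, smul_eq_mul,
    inv_mul_eq_iff_eq_mul₀ (by simp)] at htrace
  exact htrace

variable [IsAlgClosed k] [CharZero k] [Group G] {U : Type u} [AddCommGroup U] [Module k U]
  [FiniteDimensional k U] {ρ : Representation k G U} [ρ.IsIrreducible]

theorem HasInvariantSymmForms.isSymm_of_isIrreducible [Finite G]
    (hG : HasInvariantSymmForms.{u} k G) (hinv : ∀ g : G, IsConj g g⁻¹) {C : BilinForm k U}
    (hC : IsInvariantForm ρ C) : C.IsSymm := by
  have : Nontrivial U := IsSimpleModule.nontrivial (MonoidAlgebra k G) ρ.asModule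
  obtain ⟨B, hB0, hBsymm, hB⟩ := hG U ρ
  obtain ⟨c, hc⟩ := exists_smul_eq_of_finrank_eq_one (finrank_invariants_bilinFormRep ρ hinv)
    (x := ⟨B, mem_invariants_bilinFormRep.2 hB⟩) (fun h => hB0 (congrArg Subtype.val h))
    ⟨C, mem_invariants_bilinFormRep.2 hC⟩
  rw [← show c • B = C from congrArg Subtype.val hc]
  exact ⟨fun x y => congrArg (c * ·) (hBsymm.eq x y)⟩

theorem HasInvariantSymmForms.sum_character_mul_self [Fintype G]
    (hG : HasInvariantSymmForms.{u} k G) (hinv : ∀ g : G, IsConj g g⁻¹)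
    (ρ : Representation k G U) [ρ.IsIrreducible] :
    ∑ g, ρ.character (g * g) = Fintype.card G := by
  have hsum := sum_trace_mul_of_fixes_invariants (bilinFormRep ρ) LinearMap.lflip.toLinearMap
    fun C hC => LinearMap.ext₂ fun x y =>
      (hG.isSymm_of_isIrreducible hinv (mem_invariants_bilinFormRep.1 hC)).eq y x
  rw [finrank_invariants_bilinFormRep ρ hinv, Nat.cast_one, mul_one] at hsum
  rw [← hsum, ← Equiv.sum_comp (Equiv.inv G)]
  refine Finset.sum_congr rfl fun g _ => ?_
  rw [Equiv.inv_apply, Representation.character, map_mul]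
  exact (trace_eq_trace_mul_self_of_apply_swap _ _ fun C x y => bilinFormRep_apply ρ g C y x).symm

end FrobeniusSchur

section GroupAlgebraModules

open Module Representation

universe u

variable {k G : Type*} [Field k] [Group G] {S : Type u} {V : Type*}
  [AddCommGroup S] [Module k S] [Module (MonoidAlgebra k G) S]
  [IsScalarTower k (MonoidAlgebra k G) S]
  [AddCommGroup V] [Module k V] [Module (MonoidAlgebra k G) V]
  [IsScalarTower k (MonoidAlgebra k G) V]

variable (k G S) in
/-- The `k[G]`-module underlying the representation `ofModule' S` is `S` itself. -/
noncomputable def ofModuleAsModuleEquiv :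
    (ofModule' (k := k) (G := G) S).asModule ≃ₗ[MonoidAlgebra k G] S where
  __ := (ofModule' (k := k) (G := G) S).asModuleEquiv
  map_smul' r x := by
    have hlsmul : (ofModule' (k := k) (G := G) S).asAlgebraHom = Algebra.lsmul k k S :=
      (MonoidAlgebra.lift k (S →ₗ[k] S) G).apply_symm_apply _
    exact DFunLike.congr_fun (DFunLike.congr_fun hlsmul r) _

instance isIrreducible_ofModule' [IsSimpleModule (MonoidAlgebra k G) S] :
    (ofModule' (k := k) (G := G) S).IsIrreducible :=
  (irreducible_iff_isSimpleModule_asModule _).2 (.congr (ofModuleAsModuleEquiv k G S))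

variable (k G S V) in
/-- Intertwining maps between the representations of two `k[G]`-modules are the `k[G]`-linear
maps. -/
noncomputable def intertwiningMapOfModuleEquiv :
    IntertwiningMap (ofModule' (k := k) (G := G) S) (ofModule' (k := k) (G := G) V) ≃ₗ[k]
      S →ₗ[MonoidAlgebra k G] V where
  toFun f := MonoidAlgebra.equivariantOfLinearOfComm f.toLinearMap f.isIntertwining
  invFun f := ⟨f.restrictScalars k, fun g => LinearMap.ext (f.map_smul (MonoidAlgebra.of k G g))⟩
  map_add' _ _ := rfl
  map_smul' _ _ := rfl
  left_inv _ := rfl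
  right_inv _ := rfl

variable [IsAlgClosed k] [CharZero k] [Fintype G] [DecidableEq G] [FiniteDimensional k V]

theorem finrank_linearMap_eq_one_of_character_eq_card_sqrt [IsSimpleModule (MonoidAlgebra k G) S]
    (hG : HasInvariantSymmForms.{u} k G)
    (hinv : ∀ g : G, IsConj g g⁻¹)
    (hV : ∀ g, (ofModule' (k := k) (G := G) V).character g = Finset.card {σ : G | σ * σ = g}) :
    finrank k (S →ₗ[MonoidAlgebra k G] V) = 1 := by
  have : FiniteDimensional k S := Module.Finite.trans (MonoidAlgebra k G) S
  have : Invertible (Nat.card G : k) := invertibleOfNonzero (by simp)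
  let ρ : Representation k G S := ofModule' S
  have hfiber (g : G) : (ofModule' (k := k) V).character g * ρ.character g⁻¹ =
      ∑ σ with σ * σ = g, ρ.character (σ * σ) := by
    rw [hV, character_inv_of_isConj ρ (hinv g), ← nsmul_eq_mul]
    exact (Finset.sum_eq_card_nsmul fun σ hσ =>
      congrArg ρ.character (Finset.mem_filter.1 hσ).2).symm
  have hcard := card_inv_mul_sum_char_mul_char_eq_finrank ρ (ofModule' (k := k) (G := G) V)
  rw [Finset.sum_congr rfl fun g _ => hfiber g,
    Finset.sum_fiberwise_of_maps_to fun _ _ => Finset.mem_univ _,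
    hG.sum_character_mul_self hinv ρ, Nat.card_eq_fintype_card, inv_mul_cancel₀ (by simp),
    (intertwiningMapOfModuleEquiv k G S V).finrank_eq] at hcard
  exact_mod_cast hcard.symm

end GroupAlgebraModules

theorem trace_eq_sum_of_apply_single {k ι : Type*} [CommRing k] [Fintype ι] [DecidableEq ι]
    {T : Module.End k (ι →₀ k)} {c : ι → k} {φ : ι → ι}
    (hT : ∀ i, T (Finsupp.single i 1) = c i • Finsupp.single (φ i) 1) :
    LinearMap.trace k _ T = ∑ i with φ i = i, c i := by
  rw [LinearMap.trace_eq_matrix_trace k Finsupp.basisSingleOne, Matrix.trace, Finset.sum_filter]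
  refine Finset.sum_congr rfl fun i _ => ?_
  rw [Matrix.diag_apply, LinearMap.toMatrix_apply, Finsupp.coe_basisSingleOne, hT]
  simp [Finsupp.single_apply]

theorem conjInv_eq_self_iff {n : ℕ} {π : Perm (Fin n)} {w : SymInv n} :
    conjInv n π w = w ↔ Commute π w := by
  rw [conjInv, Subtype.ext_iff, mul_inv_eq_iff_eq_mul, commute_iff_eq]

theorem sum_conjInv_eq_self_neg_one_pow_invw {n : ℕ} (π : Perm (Fin n)) :
    ∑ w : SymInv n with conjInv n π w = w, (-1 : ℂ) ^ invw n w π =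
      Finset.card {σ | σ * σ = π} := by
  rw [← Int.cast_natCast, ← sum_commutingInvolutions_neg_one_pow_invw, Int.cast_sum]
  refine Finset.sum_bij (fun w _ => w.1) (fun w hw => ?_) (fun _ _ _ _ => Subtype.ext)
    (fun w hw => ?_) fun w _ => by simp
  · exact mem_commutingInvolutions.2 ⟨w.2, conjInv_eq_self_iff.1 (Finset.mem_filter.1 hw).2⟩
  · obtain ⟨hww, h⟩ := mem_commutingInvolutions.1 hw
    exact ⟨⟨w, hww⟩, Finset.mem_filter.2 ⟨Finset.mem_univ _, conjInv_eq_self_iff.2 h⟩, rfl⟩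

/-- The `ℂ[Sₙ]`-module `Vₙ` given by `π · I_w = (−1)^{inv_w(π)} I_{πwπ⁻¹}` (extended
linearly to the group algebra) is a Gelfand model for `ℂ[Sₙ]`: for every simple
`ℂ[Sₙ]`-module `S`, the space `Hom_{ℂ[Sₙ]}(S, Vₙ)` is one-dimensional over `ℂ`. -/
theorem gelfand_model_CSn (n : ℕ) (hn : 1 ≤ n)
    [Module (MonoidAlgebra ℂ (Equiv.Perm (Fin n))) (Vn n)]
    [IsScalarTower ℂ (MonoidAlgebra ℂ (Equiv.Perm (Fin n))) (Vn n)]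
    (hact : ∀ (π : Equiv.Perm (Fin n)) (w : SymInv n),
      (MonoidAlgebra.of ℂ (Equiv.Perm (Fin n)) π) • (Finsupp.single w (1 : ℂ) : Vn n) =
        ((-1 : ℂ) ^ invw n w.1 π) • Finsupp.single (conjInv n π w) (1 : ℂ)) :
    ∀ (S : Type) [AddCommGroup S] [Module (MonoidAlgebra ℂ (Equiv.Perm (Fin n))) S]
      [IsSimpleModule (MonoidAlgebra ℂ (Equiv.Perm (Fin n))) S],
      ∃ f : S →ₗ[MonoidAlgebra ℂ (Equiv.Perm (Fin n))] Vn n, f ≠ 0 ∧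
        ∀ g : S →ₗ[MonoidAlgebra ℂ (Equiv.Perm (Fin n))] Vn n,
          ∃ c : ℂ, ∀ s : S, g s = c • f s := by
  intro S _ _ _
  let _ : Module ℂ S := Module.compHom S (algebraMap ℂ (MonoidAlgebra ℂ (Perm (Fin n))))
  have : IsScalarTower ℂ (MonoidAlgebra ℂ (Perm (Fin n))) S :=
    ⟨fun c a s => by rw [Algebra.smul_def, mul_smul]; rfl⟩
  have hinv (π : Perm (Fin n)) : IsConj π π⁻¹ := by
    rw [Perm.isConj_iff_cycleType_eq, Perm.cycleType_inv]
  have hcharacter (π : Perm (Fin n)) : (Representation.ofModule' (k := ℂ) (Vn n)).character π =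
      Finset.card {σ | σ * σ = π} :=
    (trace_eq_sum_of_apply_single (hact π)).trans (sum_conjInv_eq_self_neg_one_pow_invw π)
  set_option maxSynthPendingDepth 3 in
  obtain ⟨f, hf, h⟩ := finrank_eq_one_iff'.1 <| finrank_linearMap_eq_one_of_character_eq_card_sqrt
    (S := S) (hasInvariantSymmForms_perm ℂ (Fin n)) hinv hcharacter
  exact ⟨f, hf, fun g => (h g).imp fun c hc s => (DFunLike.congr_fun hc s).symm⟩
end

section
/- For every n ≥ 1, the ℂ[ISₙ]-module V obtained by extending linearly the action x · I_w = (−1)^{inv_w(x)} I_{x w x⁻¹} if dom(w) ⊆ dom(x) and x · I_w = 0 otherwise, is a Gelfand model for the semigroup algebra ℂ[ISₙ]: for every simple ℂ[ISₙ]-module S, dim_ℂ Hom_{ℂ[ISₙ]}(S, V) = 1. -/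
open Equiv

/-- The symmetric inverse semigroup `ISₙ`: partial injective maps of `{0, …, n−1}`
(modelled as partial equivalences `Fin n ≃. Fin n`), under composition of partial
maps: `(x * y)(a) = x(y(a))`. -/
abbrev ISn (n : ℕ) : Type := PEquiv (Fin n) (Fin n)

noncomputable instance ISnMonoid (n : ℕ) : Monoid (ISn n) where
  one := PEquiv.refl (Fin n)
  mul x y := y.trans x
  mul_assoc x y z := (PEquiv.trans_assoc z y x).symm
  one_mul x := PEquiv.trans_refl x
  mul_one x := PEquiv.refl_trans x

@[simp] theorem ISn.mul_def {n : ℕ} (x y : ISn n) : x * y = y.trans x := rfl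
@[simp] theorem ISn.one_def {n : ℕ} : (1 : ISn n) = PEquiv.refl (Fin n) := rfl

/-- Involutions in `ISₙ`: elements mapping their domain bijectively to itself with
`w(w(a)) = a` for all `a` in the domain; equivalently, `w.symm = w`. -/
abbrev ISInv (n : ℕ) : Type := {w : ISn n // w.symm = w}

/-- `V`: the complex vector space with basis `{I_w : w an involution in ISₙ}`. -/
abbrev VIS (n : ℕ) : Type := ISInv n →₀ ℂ

/-- Conjugation `x w x⁻¹` of an involution `w ∈ ISₙ` by an element `x ∈ ISₙ`
(as a partial map, `a ↦ x(w(x⁻¹(a)))`; when `dom(w) ⊆ dom(x)` this is the involution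
with domain `x(dom(w))` sending `x(a) ↦ x(w(a))` for `a ∈ dom(w)`). -/
def conjIS {n : ℕ} (x : ISn n) (w : ISInv n) : ISInv n :=
  ⟨(x.symm.trans w.1).trans x, by
    rw [PEquiv.symm_trans_rev, PEquiv.symm_trans_rev, PEquiv.symm_symm, w.2,
      PEquiv.trans_assoc]⟩

/-- Conjugation `π w π⁻¹` of an involution `w ∈ ISₙ` by a permutation `π ∈ Sₙ`:
the involution with domain `π(dom(w))` sending `π(a) ↦ π(w(a))` for `a ∈ dom(w)`. -/
def conjPermIS {n : ℕ} (π : Equiv.Perm (Fin n)) (w : ISInv n) : ISInv n :=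
  conjIS π.toPEquiv w

/-- `inv_w(x) = |{(a,b) : a < b, w(a) = b, x(a) > x(b)}|`. -/
noncomputable def invIS {n : ℕ} (w : ISInv n) (x : ISn n) : ℕ :=
  {p : Fin n × Fin n | p.1 < p.2 ∧ w.1 p.1 = some p.2 ∧
    ∃ u v : Fin n, x p.1 = some u ∧ x p.2 = some v ∧ v < u}.ncard

/-!
Every permutation of `{1,…,k+1}` is conjugate to its inverse under permutations of `{1,…,k}`, and
every `x ∈ ISₙ` is conjugate to `x⁻¹` under permutations of `{1,…,n}`. If `1` is a sum of star
projections `e` of `ℝ[G]` with `e ℝ[G] e = ℝ e`, and each `x` in a larger monoid `T` is conjugate to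
`x⁻¹` under `G`, then averaging over `G` shows that `e ℝ[T] e` consists of self-adjoint elements.
Hence it is commutative, and by positivity of the involution a product of copies of `ℝ`, so `e`
splits into minimal projections of `ℝ[T]`. Climbing the chain of symmetric groups up to `ISₙ`
writes `1` as a sum of minimal projections `e` of `A = ℂ[ISₙ]`: the algebra is semisimple, and its
simple modules are the `A e` with `e ≠ 0`.

An endomorphism of `V` has a symmetric matrix. Entries between involutions with different domains
vanish by the action of the idempotents of `ISₙ`. For involutions `w` and `w'` with a common domain,
either some involutive permutation exchanges them, or some permutation fixes both and has opposite
signs on `I_w` and `I_{w'}`, which forces both entries to vanish. So the endomorphisms commute, `V`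
is multiplicity free, and `dim e V ≤ 1`. Finally, the trace of `x ↦ x⁻¹` on `ℝ[ISₙ]` is both the
number of involutions, which is `dim V = ∑ dim e V`, and the number of nonzero `e`. So
`dim e V = 1` for each nonzero `e`, and `A e` occurs in `V`.
-/

/-! ### Involutions intertwining a permutation with its inverse -/

section Involutions

theorem exists_involution_semiconj {G α : Type*} [Group G] [MulAction G α] (θ : G →* G)
    (hθ : ∀ g, θ (θ g) = g) (F : Set α)
    (hbase : ∀ a : α, ∃ v ∈ MulAction.orbit G a, (∀ g : G, g • v = v → θ g • v = v) ∧
      ∀ f ∈ F, f ∈ MulAction.orbit G a → f = v) :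
    ∃ σ : Perm α, Function.Involutive σ ∧ (∀ (g : G) a, σ (g • a) = θ g • σ a) ∧
      ∀ f ∈ F, σ f = f := by
  choose base hbase_mem hstab hbase_eq using
    fun O : MulAction.orbitRel.Quotient G α ↦ hbase O.out
  let v (a : α) : α := base (Quotient.mk _ a)
  have horbit (a : α) :
      MulAction.orbit G (Quotient.mk (MulAction.orbitRel G α) a).out = MulAction.orbit G a :=
    MulAction.orbit_eq_iff.2 (Quotient.mk_out (s := MulAction.orbitRel G α) a)
  have hv_smul (g : G) (a : α) : v (g • a) = v a :=
    congrArg base (Quotient.sound (s := MulAction.orbitRel G α) ⟨g, rfl⟩)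
  have hexists (a : α) : ∃ g : G, g • v a = a :=
    MulAction.mem_orbit_symm.1 (horbit a ▸ hbase_mem (Quotient.mk _ a))
  choose γ hγ using hexists
  have hv_v (a : α) : v (v a) = v a := by rw [← hv_smul (γ a), hγ]
  let τ (a : α) : α := θ (γ a) • v a
  have hτ (g : G) (a : α) : τ (g • v a) = θ g • v a := by
    have hv : v (g • v a) = v a := by rw [hv_smul, hv_v]
    have hγv : γ (g • v a) • v a = g • v a := by simpa only [hv] using hγ (g • v a)
    have hfix : (g⁻¹ * γ (g • v a)) • v a = v a := by rw [mul_smul, hγv, inv_smul_smul]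
    have hθ_fix : θ (g⁻¹ * γ (g • v a)) • v a = v a := hstab _ _ hfix
    rw [map_mul, map_inv, mul_smul, inv_smul_eq_iff] at hθ_fix
    simp only [τ, hv, hθ_fix]
  have hτ_smul (g : G) (a : α) : τ (g • a) = θ g • τ a := by
    conv_lhs => rw [← hγ a, ← mul_smul, hτ, map_mul, mul_smul]
  have hτ_τ : Function.Involutive τ := fun a ↦ by
    rw [hτ_smul, ← one_smul G (v a), hτ, hθ, map_one, one_smul, hγ]
  refine ⟨hτ_τ.toPerm τ, hτ_τ, hτ_smul, fun f hf ↦ ?_⟩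
  have : f = v f := hbase_eq _ f hf (horbit f ▸ MulAction.mem_orbit_self f)
  change τ f = f
  rw [this, ← one_smul G (v f), hτ, map_one]


theorem exists_involution_conj_eq_inv {α : Type*} (g : Perm α) (F : Set α)
    (hF : ∀ a ∈ F, ∀ b ∈ F, g.SameCycle a b → a = b) :
    ∃ h : Perm α, Function.Involutive h ∧ (∀ a, h (g a) = g⁻¹ (h a)) ∧ ∀ a ∈ F, h a = a := by
  let _ : MulAction (Multiplicative ℤ) α := MulAction.compHom α (zpowersHom (Perm α) g)
  have hsmul (i : Multiplicative ℤ) (a : α) : i • a = (g ^ i.toAdd) a := rfl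
  obtain ⟨h, hh, hconj, hfix⟩ :=
    exists_involution_semiconj (invMonoidHom (α := Multiplicative ℤ)) inv_inv F fun a ↦ by
      have hstab (v : α) (i : Multiplicative ℤ) (hi : i • v = v) : i⁻¹ • v = v :=
        inv_smul_eq_iff.2 hi.symm
      by_cases ha : ∃ f ∈ F, f ∈ MulAction.orbit (Multiplicative ℤ) a
      · obtain ⟨f, hf, hfa⟩ := ha
        refine ⟨f, hfa, hstab f, fun b hb hba ↦ hF b hb f hf ?_⟩
        rw [← MulAction.orbit_eq_iff.2 hba] at hfa
        obtain ⟨i, hi⟩ := hfa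
        exact ⟨i.toAdd, hi⟩
      · exact ⟨a, MulAction.mem_orbit_self a, hstab a, fun f hf hfa ↦ absurd ⟨f, hf, hfa⟩ ha⟩
  refine ⟨h, hh, fun a ↦ ?_, hfix⟩
  simpa [hsmul] using hconj (Multiplicative.ofAdd 1) a

theorem exists_conj_eq_inv_of_mem_fixingSubgroup_insert {α : Type*} {s : Set α} {a : α}
    {g : Perm α} (hg : g ∈ fixingSubgroup (Perm α) (insert a s)ᶜ) :
    ∃ h ∈ fixingSubgroup (Perm α) sᶜ, h * g * h⁻¹ = g⁻¹ := by
  rw [mem_fixingSubgroup_iff] at hg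
  have hF : ∀ b ∈ sᶜ, ∀ c ∈ sᶜ, g.SameCycle b c → b = c := by
    intro b hb c hc hbc
    by_cases hba : b = a
    · by_cases hca : c = a
      · rw [hba, hca]
      · exact hbc.eq_of_right (hg c (by grind))
    · exact hbc.eq_of_left (hg b (by grind))
  obtain ⟨h, -, hconj, hfix⟩ := exists_involution_conj_eq_inv g sᶜ hF
  refine ⟨h, (mem_fixingSubgroup_iff _).2 hfix, mul_inv_eq_of_eq_mul (Perm.ext hconj)⟩

theorem exists_perm_eqOn_and_eq_inv_pow {α : Type*} [Finite α] (p : Perm α) (D : Set α) :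
    ∃ (g : Perm α) (m : α → ℕ), Set.EqOn g p D ∧
      ∀ a ∈ Dᶜ, g a = (p⁻¹ ^ m a) a ∧ ∀ i < m a, (p⁻¹ ^ (i + 1)) a ∈ D := by
  classical
  have hexit (a : α) : ∃ j, a ∈ Dᶜ → (p⁻¹ ^ (j + 1)) a ∈ Dᶜ :=
    ⟨orderOf p⁻¹ - 1, fun ha ↦ by rwa [Nat.sub_add_cancel (orderOf_pos _), pow_orderOf_eq_one]⟩
  let m (a : α) : ℕ := Nat.find (hexit a)
  have hm {a} (ha : a ∈ Dᶜ) : (p⁻¹ ^ (m a + 1)) a ∈ Dᶜ := Nat.find_spec (hexit a) ha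
  have hm_lt {a i} (hi : i < m a) : (p⁻¹ ^ (i + 1)) a ∈ D :=
    by_contra fun h ↦ Nat.find_min (hexit a) hi fun _ ↦ h
  let γ (a : α) : α := if a ∈ D then p a else (p⁻¹ ^ m a) a
  have hγ {a} (ha : a ∈ D) : γ a = p a := if_pos ha
  have hγ' {a} (ha : a ∈ Dᶜ) : γ a = (p⁻¹ ^ m a) a := if_neg ha
  have hγ_compl {a b} (hb : b ∈ Dᶜ) (hab : p a = γ b) : a ∈ Dᶜ := by
    have : p ((p⁻¹ ^ (m b + 1)) b) = γ b := by simp [hγ' hb, pow_succ']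
    exact p.injective (hab.trans this.symm) ▸ hm hb
  have hγ_eq {a b} (ha : a ∈ Dᶜ) (hb : b ∈ Dᶜ) (hle : m a ≤ m b) (hab : γ a = γ b) : a = b := by
    obtain ⟨d, hd⟩ := Nat.exists_eq_add_of_le hle
    rw [hγ' ha, hγ' hb, hd, pow_add, Perm.mul_apply, (p⁻¹ ^ m a).injective.eq_iff] at hab
    cases d with
    | zero => simpa using hab
    | succ d => exact absurd (hab ▸ hm_lt (a := b) (i := d) (by omega)) ha
  have hγ_inj : Function.Injective γ := fun a b hab ↦ by
    by_cases ha : a ∈ D <;> by_cases hb : b ∈ D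
    · exact p.injective (by rwa [hγ ha, hγ hb] at hab)
    · exact absurd ha (hγ_compl hb (by rwa [hγ ha] at hab))
    · exact absurd hb (hγ_compl ha (by rw [hab, hγ hb]))
    · rcases le_total (m a) (m b) with h | h
      · exact hγ_eq ha hb h hab
      · exact (hγ_eq hb ha h hab.symm).symm
  exact ⟨Equiv.ofBijective γ (Finite.injective_iff_bijective.1 hγ_inj), m, fun a ha ↦ hγ ha,
    fun a ha ↦ ⟨hγ' ha, fun i ↦ hm_lt⟩⟩

theorem exists_perm_eqOn_sameCycle_inj {α : Type*} [Finite α] (p : Perm α) (D : Set α) :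
    ∃ g : Perm α, Set.EqOn g p D ∧ ∀ a ∈ Dᶜ, ∀ b ∈ Dᶜ, g.SameCycle a b → a = b := by
  obtain ⟨g, m, hgp, hg⟩ := exists_perm_eqOn_and_eq_inv_pow p D
  refine ⟨g, hgp, fun a ha b hb hab ↦ ?_⟩
  have hpath (N : ℕ) : ∃ i ≤ m a, (g ^ N) a = (p⁻¹ ^ i) a := by
    induction N with
    | zero => exact ⟨0, by simp⟩
    | succ N ih =>
      obtain ⟨i, hi, h⟩ := ih
      rw [pow_succ', Perm.mul_apply, h]
      cases i with
      | zero => exact ⟨m a, le_rfl, (hg a ha).1⟩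
      | succ i =>
        refine ⟨i, by omega, ?_⟩
        rw [hgp ((hg a ha).2 i hi)]
        simp [pow_succ']
  obtain ⟨N, rfl⟩ := hab.exists_nat_pow_eq
  obtain ⟨i, hi, h⟩ := hpath N
  rw [h] at hb ⊢
  cases i with
  | zero => rfl
  | succ i => exact absurd ((hg a ha).2 i hi) hb

end Involutions

/-! ### Pairs of involutions -/

section Dihedral

open DihedralGroup MulAction

/-- The automorphism of the infinite dihedral group that exchanges the generating reflections
`sr 0` and `sr 1`. -/
def swapReflections : DihedralGroup 0 →* DihedralGroup 0 where
  toFun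
    | r i => r (-i)
    | sr i => sr (1 - i)
  map_one' := congrArg r neg_zero
  map_mul' := by rintro (i | i) (j | j) <;> simp <;> ring

@[simp]
theorem swapReflections_r (i : ZMod 0) : swapReflections (r i) = r (-i) := rfl

@[simp]
theorem swapReflections_sr (i : ZMod 0) : swapReflections (sr i) = sr (1 - i) := rfl

theorem swapReflections_swapReflections (g : DihedralGroup 0) :
    swapReflections (swapReflections g) = g := by
  cases g <;> simp

variable {α : Type*} [MulAction (DihedralGroup 0) α]

theorem r_mul_smul_eq_self {i : ZMod 0} {u : α} (hi : r i • u = u) (k : ZMod 0) :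
    r (i * k) • u = u := by
  have hk : r (i * k) = r i ^ (show ℤ from k) := by rw [r_zpow]; rfl
  exact hk ▸ zpow_mem (K := stabilizer (DihedralGroup 0) u) hi k

theorem swapReflections_smul_eq_self {m : ZMod 0} {v : α} (hr : r (2 * m + 1) • v = v)
    (hsr : sr (-m) • v = v) {g : DihedralGroup 0} (hg : g • v = v) :
    swapReflections g • v = v := by
  cases g with
  | r i => exact inv_smul_eq_iff.2 hg.symm
  | sr i =>
    have hinner : sr (1 - i) = sr (-m) * sr i * sr (-m) * r (2 * m + 1) := by simp; ring
    simp only [swapReflections_sr, hinner, mul_smul, hr, hsr, hg]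

theorem exists_mem_orbit_sr_smul_eq_self {u : α} {m : ZMod 0} (hm : r (2 * m + 1) • u = u)
    (hu : sr (0 : ZMod 0) • u = u ∨ sr (1 : ZMod 0) • u = u) :
    ∃ v ∈ orbit (DihedralGroup 0) u, r (2 * m + 1) • v = v ∧ sr (-m) • v = v := by
  have hrot (s : ZMod 0) : r (2 * m + 1) • r s • u = r s • u := by
    have hcomm : r (2 * m + 1) * r s = r s * r (2 * m + 1) := by simp [add_comm]
    rw [← mul_smul, hcomm, mul_smul, hm]
  rcases hu with hu | hu
  · have hfix : sr (-m) * r (-m ^ 2) = r (-m ^ 2) * sr 0 * r ((2 * m + 1) * (-m)) := by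
      simp; ring
    refine ⟨r (-m ^ 2) • u, mem_orbit _ _, hrot _, ?_⟩
    rw [← mul_smul, hfix, mul_smul, r_mul_smul_eq_self hm, mul_smul, hu]
  · have hfix : sr (-m) * r ((m + 1) ^ 2) =
        r ((m + 1) ^ 2) * sr 1 * r ((2 * m + 1) * (m + 1)) := by
      simp; ring
    refine ⟨r ((m + 1) ^ 2) • u, mem_orbit _ _, hrot _, ?_⟩
    rw [← mul_smul, hfix, mul_smul, r_mul_smul_eq_self hm, mul_smul, hu]

theorem smul_eq_self_of_sr {a : α} (h0 : sr (0 : ZMod 0) • a = a) (h1 : sr (1 : ZMod 0) • a = a)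
    (g : DihedralGroup 0) : g • a = a := by
  have hr (i : ZMod 0) : r i • a = a := by
    have hgen : r (1 * i) • a = a :=
      r_mul_smul_eq_self (by rw [← sub_zero 1, ← sr_mul_sr, mul_smul, h1, h0]) i
    rwa [one_mul] at hgen
  cases g with
  | r i => exact hr i
  | sr i => rw [← zero_add i, ← sr_mul_r, mul_smul, hr, h0]

theorem exists_fixed_mem_orbit {a : α} {i : ZMod 0} (hi : sr i • a = a) :
    ∃ u ∈ orbit (DihedralGroup 0) a, sr (0 : ZMod 0) • u = u ∨ sr (1 : ZMod 0) • u = u := by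
  obtain ⟨k, h | h⟩ : ∃ k, i = 2 * k ∨ i = 2 * k + 1 := Int.even_or_odd' (show ℤ from i)
  · have hconj : sr 0 * r k = r k * sr i := by simp [h]; ring
    exact ⟨r k • a, mem_orbit _ _, .inl (by rw [← mul_smul, hconj, mul_smul, hi])⟩
  · have hconj : sr 1 * r k = r k * sr i := by simp [h]; ring
    exact ⟨r k • a, mem_orbit _ _, .inr (by rw [← mul_smul, hconj, mul_smul, hi])⟩

theorem exists_involution_swapping_reflections
    (hodd : ∀ u : α, sr (0 : ZMod 0) • u = u ∨ sr (1 : ZMod 0) • u = u →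
      ∃ m : ZMod 0, r (2 * m + 1) • u = u) :
    ∃ σ : Perm α, Function.Involutive σ ∧
      (∀ a, σ (sr (0 : ZMod 0) • a) = sr (1 : ZMod 0) • σ a) ∧
      ∀ a, sr (0 : ZMod 0) • a = a → sr (1 : ZMod 0) • a = a → σ a = a := by
  let F : Set α := {f | sr (0 : ZMod 0) • f = f ∧ sr (1 : ZMod 0) • f = f}
  have hF (a v : α) (hv : v ∈ orbit (DihedralGroup 0) a) :
      ∀ f ∈ F, f ∈ orbit (DihedralGroup 0) a → f = v := by
    intro f hf hfa
    obtain ⟨g, rfl⟩ := orbit_eq_iff.2 hfa ▸ hv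
    exact (smul_eq_self_of_sr hf.1 hf.2 g).symm
  obtain ⟨σ, hσ, hsemiconj, hfix⟩ := exists_involution_semiconj swapReflections
    swapReflections_swapReflections F fun a ↦ by
      by_cases ha : ∃ i : ZMod 0, sr i • a = a
      · obtain ⟨i, hi⟩ := ha
        obtain ⟨u, hua, hu⟩ := exists_fixed_mem_orbit hi
        obtain ⟨m, hm⟩ := hodd u hu
        obtain ⟨v, hvu, hr, hsr⟩ := exists_mem_orbit_sr_smul_eq_self hm hu
        have hva : v ∈ orbit (DihedralGroup 0) a := orbit_eq_iff.2 hua ▸ hvu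
        exact ⟨v, hva, fun g ↦ swapReflections_smul_eq_self hr hsr, hF a v hva⟩
      · refine ⟨a, mem_orbit_self a, fun g hg ↦ ?_, hF a a (mem_orbit_self a)⟩
        cases g with
        | r i => exact inv_smul_eq_iff.2 hg.symm
        | sr i => exact absurd ⟨i, hg⟩ ha
  exact ⟨σ, hσ, fun a ↦ by simpa using hsemiconj (sr 0) a, fun a h0 h1 ↦ hfix a ⟨h0, h1⟩⟩

end Dihedral

section Parity

variable {α : Type*} [Fintype α] [LinearOrder α] {w π : Perm α}

/-- The number of pairs `a < w a` whose order is reversed by `π`: the statistic `inv_w(π)` for an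
involution `w` with full domain. -/
def pairInversions (w π : Perm α) : ℕ :=
  (Finset.univ.filter fun a ↦ a < w a ∧ π (w a) < π a).card

theorem pairInversions_mod_two (hw : Function.Involutive w) (hπ : Function.Involutive π)
    (hcomm : ∀ a, π (w a) = w (π a)) :
    (pairInversions w π : ZMod 2) = (Finset.univ.filter fun a ↦ a < w a ∧ w a = π a).card := by
  set I := Finset.univ.filter fun a ↦ a < w a ∧ π (w a) < π a with hI
  have hsub : (Finset.univ.filter fun a ↦ a < w a ∧ w a = π a) = I.filter fun a ↦ w a = π a := by
    ext a
    simp only [hI, Finset.mem_filter, Finset.mem_univ, true_and]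
    refine ⟨fun ⟨hlt, heq⟩ ↦ ⟨⟨hlt, ?_⟩, heq⟩, fun ⟨⟨hlt, _⟩, heq⟩ ↦ ⟨hlt, heq⟩⟩
    rwa [heq, hπ, ← heq]
  have heven : ∑ a ∈ I, (if w a = π a then 0 else 1 : ZMod 2) = 0 := by
    refine Finset.sum_involution (fun a _ ↦ π (w a)) (fun a _ ↦ ?_) (fun a _ hne heq ↦ ?_)
      (fun a ha ↦ ?_) fun a _ ↦ ?_
    · have : w (π (w a)) = π (π (w a)) ↔ w a = π a := by rw [← hcomm, hw, hπ, eq_comm]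
      simp only [this, CharTwo.add_self_eq_zero]
    · exact hne (if_pos (by rw [← hπ (w a), heq]))
    · simp only [hI, Finset.mem_filter, Finset.mem_univ, true_and] at ha ⊢
      rw [← hcomm, hw, hπ, hπ]
      exact ha.symm
    · rw [← hcomm, hw, hπ]
  rw [pairInversions, ← hI, hsub, ← Finset.card_filter_add_card_filter_not fun a ↦ w a = π a,
    Nat.cast_add, add_eq_left, ← heven, Finset.card_filter, Nat.cast_sum]
  simp only [Nat.cast_ite, Nat.cast_one, Nat.cast_zero, ite_not]

theorem pairInversions_eq_zero (hw : Function.Involutive w) (hπ : Function.Involutive π)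
    (hcomm : ∀ a, π (w a) = w (π a)) (h : ∀ a, w a = π a → π a = a) :
    (pairInversions w π : ZMod 2) = 0 := by
  rw [pairInversions_mod_two hw hπ hcomm, Finset.filter_eq_empty_iff.2, Finset.card_empty,
    Nat.cast_zero]
  exact fun a _ ⟨hlt, heq⟩ ↦ hlt.ne (heq.trans (h a heq)).symm

theorem pairInversions_eq_one (hw : Function.Involutive w) (hπ : Function.Involutive π)
    (hcomm : ∀ a, π (w a) = w (π a)) {v : α} (hv : π v ≠ v) (hwv : w v = π v)
    (hunique : ∀ a, w a = π a → π a ≠ a → a = v ∨ a = π v) :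
    (pairInversions w π : ZMod 2) = 1 := by
  have hwπv : w (π v) = v := by rw [← hwv, hw]
  have hsingle : (Finset.univ.filter fun a ↦ a < w a ∧ w a = π a) = {min v (π v)} := by
    ext a
    simp only [Finset.mem_filter, Finset.mem_univ, true_and, Finset.mem_singleton]
    constructor
    · rintro ⟨hlt, heq⟩
      rcases hunique a heq (heq ▸ hlt.ne') with rfl | rfl
      · rw [hwv] at hlt
        exact (min_eq_left hlt.le).symm
      · rw [hwπv] at hlt
        exact (min_eq_right hlt.le).symm
    · rintro rfl
      rcases lt_or_gt_of_ne hv with hlt | hlt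
      · rw [min_eq_right hlt.le, hwπv]
        exact ⟨hlt, (hπ v).symm⟩
      · rw [min_eq_left hlt.le, hwv]
        exact ⟨hlt, rfl⟩
  rw [pairInversions_mod_two hw hπ hcomm, hsingle, Finset.card_singleton, Nat.cast_one]

end Parity

/-- Along a doubly infinite enumeration `x` of a cycle of length `2 * q`, the permutation `π` is the
half turn `x i ↦ x (i + q)`; it fixes all other points. -/
structure IsHalfTurn {α : Type*} (π : Perm α) (x : ℤ → α) (q : ℤ) : Prop where
  pos : 0 < q
  eq_iff i j : x i = x j ↔ 2 * q ∣ i - j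
  apply_eq i : π (x i) = x (i + q)
  apply_of_notMem a : a ∉ Set.range x → π a = a

namespace IsHalfTurn

variable {α : Type*} {w π : Perm α} {x : ℤ → α} {q e : ℤ}

theorem apply_ne (h : IsHalfTurn π x q) (i : ℤ) : π (x i) ≠ x i := by
  rw [Ne, h.apply_eq, h.eq_iff, add_sub_cancel_left]
  exact fun hdvd ↦ by linarith [Int.le_of_dvd h.pos hdvd, h.pos]

theorem involutive (h : IsHalfTurn π x q) : Function.Involutive π := fun a ↦ by
  by_cases ha : a ∈ Set.range x
  · obtain ⟨i, rfl⟩ := ha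
    rw [h.apply_eq, h.apply_eq, h.eq_iff]
    exact ⟨1, by ring⟩
  · rw [h.apply_of_notMem a ha, h.apply_of_notMem a ha]

theorem apply_comm (h : IsHalfTurn π x q) (hw : Function.Involutive w)
    (hwx : ∀ i, w (x i) = x (e - i)) (a : α) : π (w a) = w (π a) := by
  by_cases ha : a ∈ Set.range x
  · obtain ⟨i, rfl⟩ := ha
    rw [hwx, h.apply_eq, h.apply_eq, hwx, h.eq_iff]
    exact ⟨1, by ring⟩
  · have hwa : w a ∉ Set.range x := by
      rintro ⟨i, hi⟩
      exact ha ⟨e - i, by rw [← hwx, hi, hw]⟩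
    rw [h.apply_of_notMem a ha, h.apply_of_notMem _ hwa]

theorem pairInversions_eq [Fintype α] [LinearOrder α] (h : IsHalfTurn π x q)
    (hw : Function.Involutive w) (hwx : ∀ i, w (x i) = x (e - i)) :
    (pairInversions w π : ZMod 2) = ((q + e + 1 : ℤ) : ZMod 2) := by
  have hmeet (i : ℤ) : w (x i) = π (x i) ↔ 2 * q ∣ e - q - 2 * i := by
    rw [hwx, h.apply_eq, h.eq_iff]; ring_nf
  have hcomm := h.apply_comm hw hwx
  rcases Int.even_or_odd' (e - q) with ⟨t, ht | ht⟩
  · have hparity : ((q + e + 1 : ℤ) : ZMod 2) = (1 : ℤ) := by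
      rw [ZMod.intCast_eq_intCast_iff_dvd_sub]
      omega
    rw [hparity, Int.cast_one]
    refine pairInversions_eq_one hw h.involutive hcomm (h.apply_ne t)
      ((hmeet t).2 (by simp [ht])) fun a ha hne ↦ ?_
    obtain ⟨i, rfl⟩ : a ∈ Set.range x := by_contra fun hi ↦ hne (h.apply_of_notMem a hi)
    obtain ⟨k, hk⟩ : q ∣ t - i := by
      have := (hmeet i).1 ha
      rwa [ht, ← mul_sub, mul_dvd_mul_iff_left two_ne_zero] at this
    rw [h.apply_eq, h.eq_iff, h.eq_iff]
    rcases Int.even_or_odd' k with ⟨l, rfl | rfl⟩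
    · exact .inl ⟨-l, by linear_combination -hk⟩
    · exact .inr ⟨-l - 1, by linear_combination -hk⟩
  · have hparity : ((q + e + 1 : ℤ) : ZMod 2) = (0 : ℤ) := by
      rw [ZMod.intCast_eq_intCast_iff_dvd_sub]
      omega
    rw [hparity, Int.cast_zero]
    refine pairInversions_eq_zero hw h.involutive hcomm fun a ha ↦ h.apply_of_notMem a ?_
    rintro ⟨i, rfl⟩
    have htwo : (2 : ℤ) ∣ e - q - 2 * i := (dvd_mul_right 2 q).trans ((hmeet i).1 ha)
    omega

end IsHalfTurn

theorem exists_isHalfTurn {α : Type*} (c : Perm α) (u : α) {q : ℤ} (hq : 0 < q)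
    (hu : (MulAction.period c u : ℤ) = 2 * q) :
    ∃ π : Perm α, IsHalfTurn π (fun i ↦ (c ^ i) u) q := by
  classical
  refine ⟨c.cycleOf u ^ q, hq, fun i j ↦ ?_, fun i ↦ ?_, fun a ha ↦ ?_⟩
  · rw [← hu, ← MulAction.zpow_smul_eq_iff_period_dvd, sub_eq_neg_add, zpow_add, mul_smul, zpow_neg,
      inv_smul_eq_iff, Perm.smul_def, Perm.smul_def]
  · have hcycle : c.SameCycle u ((c ^ i) u) := ⟨i, rfl⟩
    rw [hcycle.cycleOf_eq, Perm.cycleOf_zpow_apply_self, ← Perm.mul_apply, ← zpow_add, add_comm]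
  · have hfix : c.cycleOf u a = a := Perm.cycleOf_apply_of_not_sameCycle ha
    exact Perm.zpow_apply_eq_self_of_apply_eq_self hfix q

section InvolutionPair

variable {α : Type*} {w w' : Perm α}

theorem mul_zpow_mul_eq (hw : Function.Involutive w) (hw' : Function.Involutive w') (i : ℤ) :
    w * (w * w') ^ i = (w * w') ^ (-i) * w := by
  have hsemi : SemiconjBy w (w * w') (w * w')⁻¹ := by
    rw [SemiconjBy, eq_inv_mul_iff_mul_eq]
    ext a
    simp [hw _, hw' _]
  rw [(hsemi.zpow_right i).eq, inv_zpow']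

/-- The action of the infinite dihedral group in which `sr 0` and `sr 1` act as two given
involutions. -/
def dihedralHom (hw : Function.Involutive w) (hw' : Function.Involutive w') :
    DihedralGroup 0 →* Perm α where
  toFun
    | .r i => (w * w') ^ (show ℤ from i)
    | .sr i => w * (w * w') ^ (show ℤ from i)
  map_one' := zpow_zero _
  map_mul' := by
    have hww : w * w = 1 := Equiv.ext hw
    have hr_sr (i j : ℤ) : w * (w * w') ^ (j - i) = (w * w') ^ i * (w * (w * w') ^ j) := by
      rw [sub_eq_neg_add, zpow_add, ← mul_assoc, mul_zpow_mul_eq hw hw', neg_neg, mul_assoc]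
    have hsr_r (i j : ℤ) : w * (w * w') ^ (i + j) = w * (w * w') ^ i * (w * w') ^ j := by
      rw [zpow_add, mul_assoc]
    have hsr_sr (i j : ℤ) : (w * w') ^ (j - i) = w * (w * w') ^ i * (w * (w * w') ^ j) := by
      rw [mul_assoc, ← hr_sr, ← mul_assoc, hww, one_mul]
    rintro (i | i) (j | j)
    · exact zpow_add (w * w') i j
    · exact hr_sr i j
    · exact hsr_r i j
    · exact hsr_sr i j

theorem exists_swapping_involution (hw : Function.Involutive w) (hw' : Function.Involutive w')
    (hodd : ∀ u, w u = u ∨ w' u = u → ∃ m : ℤ, ((w * w') ^ (2 * m + 1)) u = u) :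
    ∃ σ : Perm α, Function.Involutive σ ∧ (∀ a, σ (w a) = w' (σ a)) ∧
      ∀ a, w a = a → w' a = a → σ a = a := by
  let _ : MulAction (DihedralGroup 0) α := MulAction.compHom α (dihedralHom hw hw')
  have hsr0 (a : α) : DihedralGroup.sr (0 : ZMod 0) • a = w a := rfl
  have hsr1 (a : α) : DihedralGroup.sr (1 : ZMod 0) • a = w' a := by
    change w ((w * w') ^ (1 : ℤ) • a) = w' a
    simp [hw _]
  obtain ⟨σ, hσ, hswap, hfix⟩ := exists_involution_swapping_reflections (α := α) fun u hu ↦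
    hodd u (by rwa [hsr0, hsr1] at hu)
  exact ⟨σ, hσ, fun a ↦ (hswap a).trans (hsr1 _),
    fun a ha ha' ↦ hfix a ha (by rwa [hsr1])⟩

theorem exists_commuting_involution [Fintype α] [LinearOrder α] (hw : Function.Involutive w)
    (hw' : Function.Involutive w') {u : α} (hu : w u = u)
    (heven : ∀ m : ℤ, ((w * w') ^ (2 * m + 1)) u ≠ u) :
    ∃ π : Perm α, Function.Involutive π ∧ (∀ a, π (w a) = w (π a)) ∧ (∀ a, π (w' a) = w' (π a)) ∧
      (∀ a, w a = a → w' a = a → π a = a) ∧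
      (pairInversions w π + pairInversions w' π : ZMod 2) = 1 := by
  obtain ⟨q, hq | hq⟩ := Int.even_or_odd' (MulAction.period (w * w') u : ℤ)
  swap
  · have hfix : (w * w') ^ (MulAction.period (w * w') u : ℤ) • u = u :=
      MulAction.zpow_smul_eq_iff_period_dvd.2 dvd_rfl
    exact absurd (hq ▸ hfix) (heven q)
  have hpos : 0 < q := by
    have := MulAction.period_pos_of_orderOf_pos (orderOf_pos (w * w')) u
    omega
  obtain ⟨π, hπ⟩ := exists_isHalfTurn (w * w') u hpos hq
  have hwx (i : ℤ) : w (((w * w') ^ i) u) = ((w * w') ^ (0 - i)) u := by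
    rw [← Perm.mul_apply, mul_zpow_mul_eq hw hw', Perm.mul_apply, hu, zero_sub]
  have hwx' (i : ℤ) : w' (((w * w') ^ i) u) = ((w * w') ^ (-1 - i)) u := by
    have hgen (a : α) : w' a = w ((w * w') a) := (hw _).symm
    rw [hgen, ← Perm.mul_apply (w * w'), ← zpow_one_add, hwx]
    ring_nf
  refine ⟨π, hπ.involutive, hπ.apply_comm hw hwx, hπ.apply_comm hw' hwx', fun a ha ha' ↦ ?_, ?_⟩
  · refine hπ.apply_of_notMem a ?_
    rintro ⟨i, rfl⟩
    have hrot : (w * w') (((w * w') ^ i) u) = ((w * w') ^ i) u := by rw [Perm.mul_apply, ha', ha]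
    refine heven 0 (((w * w') ^ i).injective ?_)
    rw [← Perm.mul_apply, ← zpow_add, ← hrot, ← Perm.mul_apply, ← zpow_one_add]
    ring_nf
  · rw [hπ.pairInversions_eq hw hwx, hπ.pairInversions_eq hw' hwx', ← Int.cast_add]
    have : ((q + 0 + 1 + (q + -1 + 1) : ℤ) : ZMod 2) = (1 : ℤ) := by
      rw [ZMod.intCast_eq_intCast_iff_dvd_sub]
      omega
    rw [this, Int.cast_one]

theorem exists_swapping_or_commuting_involution [Fintype α] [LinearOrder α]
    (hw : Function.Involutive w) (hw' : Function.Involutive w') :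
    (∃ σ : Perm α, Function.Involutive σ ∧ (∀ a, σ (w a) = w' (σ a)) ∧
      ∀ a, w a = a → w' a = a → σ a = a) ∨
    ∃ π : Perm α, Function.Involutive π ∧ (∀ a, π (w a) = w (π a)) ∧ (∀ a, π (w' a) = w' (π a)) ∧
      (∀ a, w a = a → w' a = a → π a = a) ∧
      (pairInversions w π + pairInversions w' π : ZMod 2) = 1 := by
  by_cases hodd : ∀ u, w u = u ∨ w' u = u → ∃ m : ℤ, ((w * w') ^ (2 * m + 1)) u = u
  · exact .inl (exists_swapping_involution hw hw' hodd)
  · push Not at hodd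
    obtain ⟨u, hu | hu, heven⟩ := hodd
    · exact .inr (exists_commuting_involution hw hw' hu heven)
    · have heven' (m : ℤ) : ((w' * w) ^ (2 * m + 1)) u ≠ u := by
        have hinv : w' * w = (w * w')⁻¹ := by
          rw [eq_inv_iff_mul_eq_one]
          ext a
          simp [hw _, hw' _]
        have hne := heven (-m - 1)
        rw [hinv, inv_zpow']
        convert hne using 4
        ring
      obtain ⟨π, hπ, hcomm', hcomm, hfix, hodd⟩ := exists_commuting_involution hw' hw hu heven'
      exact .inr ⟨π, hπ, hcomm, hcomm', fun a ha ha' ↦ hfix a ha' ha,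
        (add_comm ..).trans hodd⟩

end InvolutionPair

/-! ### Minimal projections -/

section Idempotents

variable {C : Type*} [NonUnitalCommRing C] [Module ℝ C] [IsScalarTower ℝ C C]
  [SMulCommClass ℝ C C] [FiniteDimensional ℝ C] (φ : C →ₗ[ℝ] ℝ)

theorem exists_sum_eigenvectors_eq_of_pos (hφ : ∀ c ≠ 0, 0 < φ (c * c)) (f : C) :
    ∃ v : (C → ℝ) →₀ C, (∀ χ c, c * v χ = χ c • v χ) ∧ ∑ χ ∈ v.support, v χ = f := by
  let core : InnerProductSpace.Core ℝ C :=
    { inner := fun a b ↦ φ (a * b)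
      conj_inner_symm := fun a b ↦ by simp [mul_comm]
      re_inner_nonneg := fun a ↦ by
        rcases eq_or_ne a 0 with rfl | ha
        · simp
        · exact (hφ a ha).le
      add_left := fun a b c ↦ by simp [add_mul]
      smul_left := fun a b r ↦ by simp [smul_mul_assoc]
      definite := fun a ha ↦ by_contra fun h ↦ (hφ a h).ne' ha }
  let _ : NormedAddCommGroup C := core.toNormedAddCommGroup
  let _ : InnerProductSpace ℝ C := InnerProductSpace.ofCore core.toCore
  let E (χ : C → ℝ) : Submodule ℝ C := ⨅ c, Module.End.eigenspace (LinearMap.mulLeft ℝ c) (χ c)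
  have htop : ⨆ χ, E χ = ⊤ := by
    refine LinearMap.IsSymmetric.iSup_iInf_eq_top_of_commute (fun c a b ↦ ?_) fun a b _ ↦ ?_
    · change φ (c * a * b) = φ (a * (c * b))
      rw [mul_left_comm, mul_assoc]
    · exact LinearMap.ext fun c ↦ mul_left_comm a b c
  obtain ⟨v, hv, hsum⟩ := (Submodule.mem_iSup_iff_exists_finsupp E f).1 (htop ▸ Submodule.mem_top)
  exact ⟨v, fun χ c ↦ Module.End.mem_eigenspace_iff.1 (Submodule.mem_iInf _ |>.1 (hv χ) c), hsum⟩

theorem mem_closure_idempotents_of_pos (hφ : ∀ c ≠ 0, 0 < φ (c * c)) {f : C}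
    (hf : ∀ c, f * c = c) :
    f ∈ AddSubmonoid.closure {p : C | IsIdempotentElem p ∧ ∀ c, ∃ r : ℝ, c * p = r • p} := by
  obtain ⟨v, hv, hsum⟩ := exists_sum_eigenvectors_eq_of_pos φ hφ f
  have horth {χ ψ : C → ℝ} (hne : χ ≠ ψ) : v χ * v ψ = 0 := by
    obtain ⟨c, hc⟩ := Function.ne_iff.1 hne
    have h : χ c • (v χ * v ψ) = ψ c • (v χ * v ψ) := by
      rw [← smul_mul_assoc, ← hv χ, ← mul_smul_comm, ← hv ψ, mul_left_comm, mul_assoc]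
    rw [← sub_eq_zero, ← sub_smul, smul_eq_zero, sub_eq_zero] at h
    exact h.resolve_left hc
  have hidem (χ : C → ℝ) : IsIdempotentElem (v χ) := by
    refine Eq.symm ?_
    calc v χ = ∑ ψ ∈ v.support, v ψ * v χ := by rw [← Finset.sum_mul, hsum, hf]
      _ = v χ * v χ := Finset.sum_eq_single χ (fun ψ _ hne ↦ horth hne) fun hχ ↦ by
        rw [Finsupp.notMem_support_iff.1 hχ, zero_mul]
  rw [← hsum]
  exact sum_mem fun χ _ ↦ AddSubmonoid.subset_closure ⟨hidem χ, fun c ↦ ⟨χ c, hv χ c⟩⟩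

end Idempotents

section MinimalProjection

/-- A minimal projection of the `*`-subalgebra `B`: a self-adjoint idempotent `p ∈ B` with
`p B p = k p`. The zero element is allowed, so that no case distinction is needed when `1` is
decomposed into minimal projections. -/
def IsMinimalProjection {k R : Type*} [CommSemiring k] [Semiring R] [Star R] [Algebra k R]
    (B : Subalgebra k R) (p : R) : Prop :=
  p ∈ B ∧ IsStarProjection p ∧ ∀ b ∈ B, ∃ r : k, p * b * p = r • p

variable {R : Type*} [Ring R] [StarRing R] [Algebra ℝ R] {B B' : Subalgebra ℝ R} {e : R}

theorem star_sum_conj_eq [StarModule ℝ R] {G : Type*} [Group G] [Fintype G] {u : G →* R}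
    (hu : ∀ g, star (u g) = u g⁻¹) {a : R}
    (ha : a ∈ Submodule.span ℝ {x | ∃ g, u g * x * u g⁻¹ = star x}) :
    star (∑ g, u g * a * u g⁻¹) = ∑ g, u g * a * u g⁻¹ := by
  induction ha using Submodule.span_induction with
  | zero => simp only [mul_zero, zero_mul, Finset.sum_const_zero, star_zero]
  | add x y _ _ hx hy => simp only [mul_add, add_mul, Finset.sum_add_distrib, star_add, hx, hy]
  | smul r x _ hx =>
    simp only [mul_smul_comm, smul_mul_assoc, ← Finset.smul_sum, star_smul, star_trivial, hx]
  | mem x hx =>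
    obtain ⟨g, hg⟩ := hx
    calc star (∑ h, u h * x * u h⁻¹) = ∑ h, u h * star x * u h⁻¹ := by
          simp only [star_sum, star_mul, hu, inv_inv, mul_assoc]
      _ = ∑ h, u (h * g) * x * u (h * g)⁻¹ := by
          simp only [← hg, map_mul, mul_inv_rev, mul_assoc]
      _ = ∑ h, u h * x * u h⁻¹ := Equiv.sum_comp (Equiv.mulRight g) fun h ↦ u h * x * u h⁻¹

theorem IsMinimalProjection.star_mul_mul_eq [StarModule ℝ R] {G : Type*} [Group G] [Finite G]
    {u : G →* R} (hu : ∀ g, star (u g) = u g⁻¹) (huB : ∀ g, u g ∈ B) (hBB' : B ≤ B')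
    (hB' : Subalgebra.toSubmodule B' ≤ Submodule.span ℝ {x | ∃ g, u g * x * u g⁻¹ = star x})
    (he : IsMinimalProjection B e) {b : R} (hb : b ∈ B') :
    star (e * b * e) = e * b * e := by
  obtain ⟨heB, ⟨hidem, hsa⟩, hmin⟩ := he
  have := Fintype.ofFinite G
  rcases eq_or_ne e 0 with rfl | hne
  · simp
  choose c hc using fun g ↦ hmin (u g) (huB g)
  have hc' (g : G) : e * u g⁻¹ * e = c g • e := by
    simpa only [star_mul, star_smul, hu, hsa.star_eq, star_trivial, mul_assoc] using
      congrArg star (hc g)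
  have hsum : 0 < ∑ g, c g * c g := by
    refine Finset.sum_pos' (fun g _ ↦ mul_self_nonneg (c g)) ⟨1, Finset.mem_univ 1, ?_⟩
    refine mul_self_pos.2 fun h ↦ hne ?_
    simpa [h, hidem.eq] using hc 1
  have havg : e * (∑ g, u g * (e * b * e) * u g⁻¹) * e = (∑ g, c g * c g) • (e * b * e) := by
    rw [Finset.mul_sum, Finset.sum_mul, Finset.sum_smul]
    refine Finset.sum_congr rfl fun g _ ↦ ?_
    calc e * (u g * (e * b * e) * u g⁻¹) * e = e * u g * e * b * (e * u g⁻¹ * e) := by noncomm_ring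
      _ = (c g * c g) • (e * b * e) := by
        rw [hc, hc', smul_mul_assoc, smul_mul_assoc, mul_smul_comm, smul_smul]
  have hmem : e * b * e ∈ B' := mul_mem (mul_mem (hBB' heB) hb) (hBB' heB)
  refine smul_right_injective R hsum.ne' ?_
  calc (∑ g, c g * c g) • star (e * b * e)
      = star (e * (∑ g, u g * (e * b * e) * u g⁻¹) * e) := by
        rw [havg, star_smul, star_trivial (∑ g, c g * c g)]
    _ = e * (∑ g, u g * (e * b * e) * u g⁻¹) * e := by
        rw [star_mul, star_mul, hsa.star_eq, star_sum_conj_eq hu (hB' hmem), ← mul_assoc]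
    _ = (∑ g, c g * c g) • (e * b * e) := havg

/-- The elements of `B` on which `e` acts as the identity from both sides; this is `e B e` if
`e ∈ B` is idempotent. -/
def corner (B : Subalgebra ℝ R) (e : R) : NonUnitalSubalgebra ℝ R where
  carrier := {c | c ∈ B ∧ e * c = c ∧ c * e = c}
  add_mem' := fun ⟨ha, hea, hae⟩ ⟨hb, heb, hbe⟩ ↦
    ⟨add_mem ha hb, by rw [mul_add, hea, heb], by rw [add_mul, hae, hbe]⟩
  zero_mem' := ⟨zero_mem B, mul_zero e, zero_mul e⟩
  mul_mem' := fun ⟨ha, hea, _⟩ ⟨hb, _, hbe⟩ ↦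
    ⟨mul_mem ha hb, by rw [← mul_assoc, hea], by rw [mul_assoc, hbe]⟩
  smul_mem' := fun r c ⟨hc, hec, hce⟩ ↦
    ⟨B.smul_mem hc r, by rw [mul_smul_comm, hec], by rw [smul_mul_assoc, hce]⟩

theorem mem_closure_isMinimalProjection [FiniteDimensional ℝ R] {φ : R →ₗ[ℝ] ℝ}
    (hφ : ∀ a ≠ 0, 0 < φ (star a * a)) (heB : e ∈ B) (he : IsIdempotentElem e)
    (hstar : ∀ b ∈ B, star (e * b * e) = e * b * e) :
    e ∈ AddSubmonoid.closure {p | IsMinimalProjection B p} := by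
  let C := corner B e
  have hsa {c : R} (hc : c ∈ C) : star c = c := by
    obtain ⟨hcB, hec, hce⟩ := hc
    simpa only [hec, hce] using hstar c hcB
  have hcomm (a b : C) : a * b = b * a := Subtype.ext <| calc
    (a * b : R) = star (a * b : R) := (hsa (mul_mem a.2 b.2)).symm
    _ = b * a := by rw [star_mul, hsa a.2, hsa b.2]
  let _ : NonUnitalCommRing C := { mul_comm := hcomm }
  have heC : e ∈ C := ⟨heB, he, he⟩
  let ι : C →ₙₐ[ℝ] R := NonUnitalSubalgebraClass.subtype C
  have hpos (c : C) (hc : c ≠ 0) : 0 < φ (ι (c * c)) := by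
    have h := hφ c (mt ZeroMemClass.coe_eq_zero.1 hc)
    rwa [hsa c.2] at h
  have : FiniteDimensional ℝ C := inferInstanceAs (FiniteDimensional ℝ C.toSubmodule)
  have hmem := AddSubmonoid.mem_map_of_mem ι <|
    mem_closure_idempotents_of_pos (φ ∘ₗ (ι : C →ₗ[ℝ] R)) hpos (f := ⟨e, heC⟩) fun c ↦
      Subtype.ext c.2.2.1
  rw [AddMonoidHom.map_mclosure] at hmem
  refine AddSubmonoid.closure_mono ?_ hmem
  rintro _ ⟨p, ⟨hp, hmin⟩, rfl⟩
  have hpp : (p * p : R) = p := congrArg Subtype.val hp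
  refine ⟨p.2.1, ⟨hpp, hsa p.2⟩, fun b hb ↦ ?_⟩
  have hpbp : (p * b * p : R) ∈ C :=
    ⟨mul_mem (mul_mem p.2.1 hb) p.2.1, by rw [← mul_assoc, ← mul_assoc, p.2.2.1],
      by rw [mul_assoc, p.2.2.2]⟩
  obtain ⟨r, hr⟩ := hmin ⟨p * b * p, hpbp⟩
  refine ⟨r, .trans ?_ (congrArg Subtype.val hr)⟩
  change (p * b * p : R) = p * b * p * p
  rw [mul_assoc _ (p : R), hpp]

theorem one_mem_closure_isMinimalProjection_of_le [StarModule ℝ R] [FiniteDimensional ℝ R]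
    {φ : R →ₗ[ℝ] ℝ} (hφ : ∀ a ≠ 0, 0 < φ (star a * a)) {G : Type*} [Group G] [Finite G]
    {u : G →* R} (hu : ∀ g, star (u g) = u g⁻¹) (huB : ∀ g, u g ∈ B) (hBB' : B ≤ B')
    (hB' : Subalgebra.toSubmodule B' ≤ Submodule.span ℝ {x | ∃ g, u g * x * u g⁻¹ = star x})
    (hB : 1 ∈ AddSubmonoid.closure {p | IsMinimalProjection B p}) :
    1 ∈ AddSubmonoid.closure {p | IsMinimalProjection B' p} :=
  AddSubmonoid.closure_le.2
    (fun _ he ↦ mem_closure_isMinimalProjection hφ (hBB' he.1) he.2.1.1 fun _ hb ↦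
      he.star_mul_mul_eq hu huB hBB' hB' hb) hB

end MinimalProjection

/-! ### Positivity of the star algebra `𝕜[ISₙ]` -/

section StarMonoidAlgebra

variable {k M : Type*} [CommSemiring k] [StarRing k] [Monoid M] [StarMul M]

/-- The conjugate-linear extension of the involution of `M` to its monoid algebra. -/
noncomputable instance : StarRing (MonoidAlgebra k M) where
  star a := (a.map (starAddEquiv : k ≃+ k)).mapDomain star
  star_involutive a := by
    induction a using MonoidAlgebra.induction_linear with
    | zero => simp
    | add a b ha hb =>
      simp only [MonoidAlgebra.map_add, MonoidAlgebra.mapDomain_add] at ha hb ⊢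
      rw [ha, hb]
    | single x r => simp
  star_add a b := by rw [MonoidAlgebra.map_add, MonoidAlgebra.mapDomain_add]
  star_mul a b := by
    induction a using MonoidAlgebra.induction_linear with
    | zero => simp
    | add a a' ha ha' =>
      simp only [MonoidAlgebra.map_add, MonoidAlgebra.mapDomain_add, add_mul, mul_add, ha, ha']
    | single x r =>
      induction b using MonoidAlgebra.induction_linear with
      | zero => simp
      | add b b' hb hb' =>
        simp only [MonoidAlgebra.map_add, MonoidAlgebra.mapDomain_add, add_mul, mul_add, hb, hb']
      | single y s => simp [MonoidAlgebra.single_mul_single, mul_comm]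

theorem star_monoidAlgebra_single (x : M) (r : k) :
    star (MonoidAlgebra.single x r) = MonoidAlgebra.single (star x) (star r) :=
  (congrArg (MonoidAlgebra.mapDomain star) (MonoidAlgebra.map_single ..)).trans
    MonoidAlgebra.mapDomain_single

theorem star_monoidAlgebra_of (x : M) :
    star (MonoidAlgebra.of k M x) = MonoidAlgebra.of k M (star x) :=
  (star_monoidAlgebra_single x 1).trans (by rw [star_one]; rfl)

instance : StarModule k (MonoidAlgebra k M) where
  star_smul r a := by
    induction a using MonoidAlgebra.induction_linear with
    | zero => simp
    | add a b ha hb => simp only [smul_add, star_add, ha, hb]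
    | single x s => simp [star_monoidAlgebra_single]

end StarMonoidAlgebra

namespace ISn

variable {n : ℕ}

/-- The inverse `x⁻¹` of a partial injective map makes `ISₙ` a monoid with involution. -/
instance : StarMul (ISn n) where
  star := PEquiv.symm
  star_involutive := PEquiv.symm_symm
  star_mul x y := PEquiv.symm_trans_rev y x

theorem star_def (x : ISn n) : star x = x.symm := rfl

noncomputable instance : Fintype (ISn n) :=
  .ofInjective (fun x a ↦ x a) DFunLike.coe_injective

section UpperSum

open scoped Classical in
/-- The sum of the coefficients of an element of `𝕜[ISₙ]` over all extensions of the partial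
map `z`. Möbius inversion over the restriction order recovers the coefficients. -/
noncomputable def upperSum (𝕜 : Type*) [CommSemiring 𝕜] (z : ISn n) :
    MonoidAlgebra 𝕜 (ISn n) →ₗ[𝕜] 𝕜 :=
  ∑ x with z ≤ x, Finsupp.lapply x ∘ₗ (MonoidAlgebra.coeffLinearEquiv 𝕜).toLinearMap

variable {𝕜 : Type*}

open scoped Classical in
theorem upperSum_single [CommSemiring 𝕜] (z x : ISn n) (r : 𝕜) :
    upperSum 𝕜 z (MonoidAlgebra.single x r) = if z ≤ x then r else 0 := by
  simp [upperSum, Finsupp.single_apply]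

theorem exists_upperSum_ne_zero [CommSemiring 𝕜] {a : MonoidAlgebra 𝕜 (ISn n)} (ha : a ≠ 0) :
    ∃ z, upperSum 𝕜 z a ≠ 0 := by
  obtain ⟨x, hx⟩ := a.coeff.support.exists_maximal
    (Finsupp.support_nonempty_iff.2 (mt MonoidAlgebra.coeff_eq_zero.1 ha))
  refine ⟨x, ?_⟩
  have h : upperSum 𝕜 x a = a.coeff x := by
    simp only [upperSum, LinearMap.sum_apply]
    refine Finset.sum_eq_single x (fun y hy hyx ↦ ?_) fun hx' ↦ (hx' (by simp)).elim
    exact Finsupp.notMem_support_iff.1 fun hya ↦ hyx (hx.eq_of_ge hya (by simpa using hy))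
  rw [h]
  exact Finsupp.mem_support_iff.1 hx.1

open scoped Classical in
/-- The functional `∑ upperSum z` over the idempotents `z ≤ 1`: a faithful positive functional on
the `*`-algebra `𝕜[ISₙ]`. -/
noncomputable def faithfulFunctional (𝕜 : Type*) [CommSemiring 𝕜] (n : ℕ) :
    MonoidAlgebra 𝕜 (ISn n) →ₗ[𝕜] 𝕜 :=
  ∑ z with z ≤ (1 : ISn n), upperSum 𝕜 z

open scoped Classical Finset in
theorem card_le_star_mul (x y : ISn n) :
    #{z : ISn n | z ≤ 1 ∧ z ≤ star x * y} = #{z : ISn n | z ≤ y ∧ z ≤ x} := by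
  simp only [PEquiv.le_def, Option.mem_def, ISn.one_def, PEquiv.refl_apply, star_def, mul_def,
    PEquiv.trans_eq_some, PEquiv.eq_some_iff, Option.some.injEq]
  refine Finset.card_nbij' (fun e ↦ e.trans x) (fun z ↦ z.trans z.symm) (fun e ↦ ?_) (fun z ↦ ?_)
    (fun e ↦ ?_) fun z ↦ ?_
  · simp only [Finset.coe_filter_univ, Set.mem_ofPred_eq, PEquiv.trans_eq_some]
    grind
  · have hinj {a b c : Fin n} : z a = some c → z b = some c → a = b := z.inj
    simp only [Finset.coe_filter_univ, Set.mem_ofPred_eq, PEquiv.trans_eq_some, PEquiv.eq_some_iff]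
    grind
  · simp only [Finset.coe_filter_univ, Set.mem_ofPred_eq]
    have hinj {a b c : Fin n} : x a = some c → x b = some c → a = b := x.inj
    refine fun h ↦ PEquiv.ext fun a ↦ Option.ext fun b ↦ ?_
    simp only [PEquiv.trans_eq_some, PEquiv.eq_some_iff]
    grind
  · simp only [Finset.coe_filter_univ, Set.mem_ofPred_eq]
    refine fun h ↦ PEquiv.ext fun a ↦ Option.ext fun b ↦ ?_
    simp only [PEquiv.trans_eq_some, PEquiv.eq_some_iff]
    grind

theorem faithfulFunctional_star_mul [CommRing 𝕜] [StarRing 𝕜] (a b : MonoidAlgebra 𝕜 (ISn n)) :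
    faithfulFunctional 𝕜 n (star a * b) = ∑ z, star (upperSum 𝕜 z a) * upperSum 𝕜 z b := by
  induction a using MonoidAlgebra.induction_linear with
  | zero => simp
  | add a a' ha ha' => simp only [star_add, add_mul, map_add, ha, ha', Finset.sum_add_distrib]
  | single x r =>
    induction b using MonoidAlgebra.induction_linear with
    | zero => simp
    | add b b' hb hb' => simp only [mul_add, map_add, hb, hb', Finset.sum_add_distrib]
    | single y s =>
      simp only [star_monoidAlgebra_single, MonoidAlgebra.single_mul_single, faithfulFunctional,
        LinearMap.sum_apply, upperSum_single, apply_ite star, star_zero, ite_mul, mul_ite, zero_mul,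
        mul_zero, ← ite_and, Finset.sum_ite, Finset.sum_const_zero, add_zero, Finset.sum_const,
        Finset.filter_filter, card_le_star_mul]

theorem faithfulFunctional_star_mul_self_pos [RCLike 𝕜] {a : MonoidAlgebra 𝕜 (ISn n)} (ha : a ≠ 0) :
    0 < RCLike.re (faithfulFunctional 𝕜 n (star a * a)) := by
  obtain ⟨z, hz⟩ := exists_upperSum_ne_zero ha
  rw [faithfulFunctional_star_mul, map_sum]
  simp only [RCLike.star_def, RCLike.conj_mul, ← RCLike.ofReal_pow, RCLike.ofReal_re]
  exact Finset.sum_pos' (fun _ _ ↦ sq_nonneg _) ⟨z, Finset.mem_univ z, by positivity⟩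

end UpperSum

end ISn

/-! ### Decomposing the identity of `ℝ[ISₙ]` -/

section SubmonoidAlgebra

variable {M : Type*} [Monoid M]

/-- The monoid algebra `ℝ[T]` of a submonoid `T` of `M`, as a subalgebra of `ℝ[M]`. -/
noncomputable def submonoidAlgebra (T : Submonoid M) : Subalgebra ℝ (MonoidAlgebra ℝ M) :=
  Algebra.adjoin ℝ (T.map (MonoidAlgebra.of ℝ M) : Set (MonoidAlgebra ℝ M))

theorem of_mem_submonoidAlgebra {T : Submonoid M} {x : M} (hx : x ∈ T) :
    MonoidAlgebra.of ℝ M x ∈ submonoidAlgebra T :=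
  Algebra.subset_adjoin ⟨x, hx, rfl⟩

theorem submonoidAlgebra_mono {T T' : Submonoid M} (h : T ≤ T') :
    submonoidAlgebra T ≤ submonoidAlgebra T' :=
  Algebra.adjoin_mono (Submonoid.monotone_map h)

theorem toSubmodule_submonoidAlgebra (T : Submonoid M) :
    Subalgebra.toSubmodule (submonoidAlgebra T) =
      Submodule.span ℝ (T.map (MonoidAlgebra.of ℝ M) : Set (MonoidAlgebra ℝ M)) := by
  rw [submonoidAlgebra, Algebra.adjoin_eq_span, Submonoid.closure_eq]

theorem submonoidAlgebra_top : submonoidAlgebra (⊤ : Submonoid M) = ⊤ := by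
  refine top_le_iff.1 fun a _ ↦ Algebra.adjoin_mono ?_ (MonoidAlgebra.mem_adjoin_support a)
  rintro _ ⟨x, -, rfl⟩
  exact ⟨x, Submonoid.mem_top x, rfl⟩

variable [StarMul M]

theorem isMinimalProjection_submonoidAlgebra_bot_one :
    IsMinimalProjection (submonoidAlgebra (⊥ : Submonoid M)) 1 := by
  refine ⟨one_mem _, .one _, fun b hb ↦ ?_⟩
  rw [← Subalgebra.mem_toSubmodule, toSubmodule_submonoidAlgebra, Submonoid.map_bot,
    Submonoid.coe_bot, Submodule.mem_span_singleton] at hb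
  obtain ⟨r, rfl⟩ := hb
  exact ⟨r, by rw [one_mul, mul_one]⟩

theorem one_mem_closure_submonoidAlgebra_of_conj_eq_star
    [FiniteDimensional ℝ (MonoidAlgebra ℝ M)] {φ : MonoidAlgebra ℝ M →ₗ[ℝ] ℝ}
    (hφ : ∀ a ≠ 0, 0 < φ (star a * a)) {G : Type*} [Group G] [Finite G]
    {u : G →* M} (hu : ∀ g, star (u g) = u g⁻¹) {T : Submonoid M} (hT : MonoidHom.mrange u ≤ T)
    (hconj : ∀ x ∈ T, ∃ g, u g * x * u g⁻¹ = star x)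
    (h : 1 ∈ AddSubmonoid.closure
      {p | IsMinimalProjection (submonoidAlgebra (MonoidHom.mrange u)) p}) :
    1 ∈ AddSubmonoid.closure {p | IsMinimalProjection (submonoidAlgebra T) p} := by
  refine one_mem_closure_isMinimalProjection_of_le hφ (u := (MonoidAlgebra.of ℝ M).comp u)
    (fun g ↦ ?_) (fun g ↦ of_mem_submonoidAlgebra (MonoidHom.mem_mrange.2 ⟨g, rfl⟩))
    (submonoidAlgebra_mono hT) ?_ h
  · exact (star_monoidAlgebra_of _).trans (congrArg _ (hu g))
  · rw [toSubmodule_submonoidAlgebra]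
    refine Submodule.span_mono ?_
    rintro _ ⟨x, hx, rfl⟩
    obtain ⟨g, hg⟩ := hconj x hx
    refine ⟨g, ?_⟩
    rw [star_monoidAlgebra_of, ← hg]
    simp only [MonoidHom.comp_apply, map_mul]

end SubmonoidAlgebra

namespace ISn

variable {n : ℕ}

/-- The permutations, as the units of `ISₙ`. -/
def ofPerm : Perm (Fin n) →* ISn n where
  toFun := Equiv.toPEquiv
  map_one' := Equiv.toPEquiv_refl
  map_mul' g h := Equiv.toPEquiv_trans h g

theorem ofPerm_apply (g : Perm (Fin n)) (a : Fin n) : ofPerm g a = some (g a) := rfl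

theorem mul_apply (x y : ISn n) (a : Fin n) : (x * y) a = (y a).bind x := rfl

theorem conj_ofPerm_apply_eq_some {g : Perm (Fin n)} {x : ISn n} {a b : Fin n} :
    (ofPerm g * x * ofPerm g⁻¹) a = some b ↔ x (g⁻¹ a) = some (g⁻¹ b) := by
  simp only [mul_apply, ofPerm_apply, Option.bind_some, Option.bind_eq_some_iff, Option.some_inj,
    Perm.eq_inv_iff_eq.symm]
  simp

theorem exists_perm_extending (x : ISn n) :
    ∃ p : Perm (Fin n), ∀ a b, x a = some b → p a = b := by
  have hinj : Set.InjOn (fun a ↦ (x a).getD a) {a | (x a).isSome} := by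
    intro a ha b hb hab
    obtain ⟨c, hc⟩ := Option.isSome_iff_exists.1 ha
    obtain ⟨d, hd⟩ := Option.isSome_iff_exists.1 hb
    simp only [hc, hd, Option.getD_some] at hab
    exact x.inj hc (hab ▸ hd)
  obtain ⟨p, hp⟩ := Set.MapsTo.exists_equiv_extend_of_card_eq (t := Finset.univ)
    (by simp) (by simp [Set.MapsTo]) hinj
  refine ⟨p.trans (Equiv.subtypeUnivEquiv Finset.mem_univ), fun a b hab ↦ ?_⟩
  simpa [hab] using hp a (by simp [hab])

theorem exists_conj_ofPerm_eq_star (x : ISn n) :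
    ∃ g : Perm (Fin n), ofPerm g * x * ofPerm g⁻¹ = star x := by
  obtain ⟨p, hp⟩ := x.exists_perm_extending
  obtain ⟨g, hgp, hg⟩ := exists_perm_eqOn_sameCycle_inj p {a | (x a).isSome}
  obtain ⟨h, hinv, hconj, hfix⟩ := exists_involution_conj_eq_inv g _ hg
  have hx (a b : Fin n) : x a = some b ↔ (x a).isSome ∧ g a = b := by
    refine ⟨fun hab ↦ ⟨by simp [hab], ?_⟩, fun ⟨ha, hab⟩ ↦ ?_⟩
    · exact (hgp (by simp [hab])).trans (hp a b hab)
    · obtain ⟨c, hc⟩ := Option.isSome_iff_exists.1 ha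
      rw [hc, ← hab, hgp ha, hp a c hc]
  have hdom (a : Fin n) : (x (h a)).isSome ↔ (x a).isSome := by
    by_cases ha : (x a).isSome
    · refine iff_of_true (by_contra fun hha ↦ hha ?_) ha
      rwa [← hfix _ hha, hinv a]
    · rw [hfix a ha]
  have hgh (a : Fin n) : g (h a) = h (g⁻¹ a) := by
    rw [← Perm.eq_inv_iff_eq, ← hconj]
    exact congrArg h (g.apply_symm_apply a).symm
  have hk (a : Fin n) : (g * h)⁻¹ a = h (g⁻¹ a) := by
    rw [Perm.inv_eq_iff_eq, Perm.mul_apply, hinv]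
    exact (g.apply_symm_apply a).symm
  refine ⟨g * h, PEquiv.ext fun a ↦ Option.ext fun b ↦ ?_⟩
  calc (ofPerm (g * h) * x * ofPerm (g * h)⁻¹) a = some b
      ↔ x (h (g⁻¹ a)) = some (h (g⁻¹ b)) := by rw [conj_ofPerm_apply_eq_some, hk, hk]
    _ ↔ (x (g⁻¹ a)).isSome ∧ g⁻¹ a = b := by
      rw [hx, hdom, hgh, h.injective.eq_iff, g⁻¹.injective.eq_iff]
    _ ↔ x b = some a := by 
      rw [hx, Perm.inv_eq_iff_eq, eq_comm (a := a)]
      exact and_congr_left fun hab ↦ by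
        rw [← hab]
        exact iff_of_eq (congrArg (fun c ↦ (x c).isSome = true) (g.symm_apply_apply b))
    _ ↔ star x a = some b := (PEquiv.eq_some_iff x).symm

/-- The embedding into `ISₙ` of the group of permutations of `{1,…,n}` supported on `s`. -/
noncomputable def ofPermSupportedOn (s : Set (Fin n)) : fixingSubgroup (Perm (Fin n)) sᶜ →* ISn n :=
  ofPerm.comp (Subgroup.subtype _)

theorem star_ofPermSupportedOn {s : Set (Fin n)} (g : fixingSubgroup (Perm (Fin n)) sᶜ) :
    star (ofPermSupportedOn s g) = ofPermSupportedOn s g⁻¹ := rfl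

theorem mrange_ofPermSupportedOn_empty :
    MonoidHom.mrange (ofPermSupportedOn (∅ : Set (Fin n))) = ⊥ := by
  rw [eq_bot_iff]
  rintro _ ⟨⟨g, hg⟩, rfl⟩
  have hg1 : g = 1 := Perm.ext fun a ↦ (mem_fixingSubgroup_iff _).1 hg a (by simp)
  subst hg1
  exact Submonoid.mem_bot.2 (map_one ofPerm)

theorem mrange_ofPermSupportedOn_mono {s t : Set (Fin n)} (h : s ⊆ t) :
    MonoidHom.mrange (ofPermSupportedOn s) ≤ MonoidHom.mrange (ofPermSupportedOn t) := by
  rintro _ ⟨⟨g, hg⟩, rfl⟩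
  exact ⟨⟨g, fixingSubgroup_antitone _ _ (Set.compl_subset_compl.2 h) hg⟩, rfl⟩

theorem exists_conj_ofPermSupportedOn_eq_star {s : Set (Fin n)} {a : Fin n} {x : ISn n}
    (hx : x ∈ MonoidHom.mrange (ofPermSupportedOn (insert a s))) :
    ∃ g, ofPermSupportedOn s g * x * ofPermSupportedOn s g⁻¹ = star x := by
  obtain ⟨⟨g, hg⟩, rfl⟩ := hx
  obtain ⟨h, hh, hgh⟩ := exists_conj_eq_inv_of_mem_fixingSubgroup_insert hg
  refine ⟨⟨h, hh⟩, .trans ?_ (congrArg ofPerm hgh)⟩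
  rw [map_mul, map_mul]
  rfl

theorem one_mem_closure_isMinimalProjection_ofPermSupportedOn (s : Finset (Fin n)) :
    1 ∈ AddSubmonoid.closure {p | IsMinimalProjection
      (submonoidAlgebra (MonoidHom.mrange (ofPermSupportedOn (s : Set (Fin n))))) p} := by
  induction s using Finset.induction_on with
  | empty =>
    rw [Finset.coe_empty, mrange_ofPermSupportedOn_empty]
    exact AddSubmonoid.subset_closure isMinimalProjection_submonoidAlgebra_bot_one
  | insert a s _ ih =>
    rw [Finset.coe_insert]
    exact one_mem_closure_submonoidAlgebra_of_conj_eq_star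
      (fun _ ↦ faithfulFunctional_star_mul_self_pos) star_ofPermSupportedOn
      (mrange_ofPermSupportedOn_mono (Set.subset_insert a s))
      (fun _ ↦ exists_conj_ofPermSupportedOn_eq_star) ih

theorem one_mem_closure_isMinimalProjection (n : ℕ) :
    (1 : MonoidAlgebra ℝ (ISn n)) ∈ AddSubmonoid.closure
      {p | IsMinimalProjection (⊤ : Subalgebra ℝ (MonoidAlgebra ℝ (ISn n))) p} := by
  rw [← submonoidAlgebra_top]
  refine one_mem_closure_submonoidAlgebra_of_conj_eq_star
    (fun _ ↦ faithfulFunctional_star_mul_self_pos) star_ofPermSupportedOn le_top (fun x _ ↦ ?_)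
    (one_mem_closure_isMinimalProjection_ofPermSupportedOn Finset.univ)
  obtain ⟨g, hg⟩ := x.exists_conj_ofPerm_eq_star
  exact ⟨⟨g, by simp⟩, hg⟩

end ISn

/-! ### Multiplicity-free modules -/

section Module

variable {k A V : Type*} [Ring A] [AddCommGroup V] [Module A V]

theorem exists_linearMap_ne_zero_of_smul_ne_zero {S : Type*} [AddCommGroup S] [Module A S]
    [IsSimpleModule A S] {e : A} [IsSimpleModule A (Submodule.span A {e})] {s : S} (hs : e • s ≠ 0)
    {v : V} (hv : e • v ≠ 0) : ∃ f : S →ₗ[A] V, f ≠ 0 := by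
  let e' : Submodule.span A {e} := ⟨e, Submodule.mem_span_singleton_self e⟩
  let φ := (LinearMap.toSpanSingleton A S s).domRestrict (Submodule.span A {e})
  let ψ := (LinearMap.toSpanSingleton A V v).domRestrict (Submodule.span A {e})
  have hφ : φ e' ≠ 0 := hs
  have hφ' : Function.Bijective φ := φ.bijective_of_ne_zero fun h ↦ hφ (DFunLike.congr_fun h e')
  let φ' := LinearEquiv.ofBijective φ hφ'
  refine ⟨ψ ∘ₗ φ'.symm, fun h ↦ hv ?_⟩
  calc e • v = ψ (φ'.symm (φ' e')) := by rw [φ'.symm_apply_apply]; rfl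
    _ = 0 := DFunLike.congr_fun h (φ' e')

variable [Field k] [Algebra k A] [Module k V] [IsScalarTower k A V]

theorem isSimpleModule_span_of_isMinimalProjection [StarRing A]
    (hA : ∀ a : A, star a * a = 0 → a = 0) {e : A} (he : IsMinimalProjection (⊤ : Subalgebra k A) e)
    (h0 : e ≠ 0) : IsSimpleModule A (Submodule.span A {e}) := by
  obtain ⟨-, ⟨-, hsa⟩, hmin⟩ := he
  refine isSimpleModule_iff_toSpanSingleton_surjective.2 ⟨?_, ?_⟩
  · exact ⟨⟨e, Submodule.mem_span_singleton_self e⟩, 0, fun h ↦ h0 (congrArg Subtype.val h)⟩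
  · rintro ⟨x, hx⟩ hx0 ⟨y, hy⟩
    obtain ⟨a, rfl⟩ := Submodule.mem_span_singleton.1 hx
    obtain ⟨b, rfl⟩ := Submodule.mem_span_singleton.1 hy
    obtain ⟨c, hc⟩ := hmin (star a * a) trivial
    have hce : star (a * e) * (a * e) = c • e := by
      rw [← hc, star_mul, hsa.star_eq]; noncomm_ring
    have hc0 : c ≠ 0 := by
      rintro rfl
      exact hx0 (Subtype.ext (hA _ (hce.trans (zero_smul k e))))
    refine ⟨b * (c⁻¹ • star (a * e)), Subtype.ext ?_⟩
    change b * (c⁻¹ • star (a * e)) * (a * e) = b * e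
    rw [mul_assoc, smul_mul_assoc, hce, inv_smul_smul₀ hc0]

theorem isSemisimpleRing_of_sum_isMinimalProjection_eq_one [StarRing A]
    (hA : ∀ a : A, star a * a = 0 → a = 0) {ι : Type*} [Fintype ι] {e : ι → A}
    (he : ∀ i, IsMinimalProjection (⊤ : Subalgebra k A) (e i)) (hsum : ∑ i, e i = 1) :
    IsSemisimpleRing A := by
  refine isSemisimpleModule_of_isSemisimpleModule_submodule (s := {i | e i ≠ 0})
    (p := fun i ↦ Submodule.span A {e i}) (fun i hi ↦ ?_) ((Ideal.eq_top_iff_one _).2 ?_)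
  · have := isSimpleModule_span_of_isMinimalProjection hA (he i) hi
    infer_instance
  · rw [← hsum]
    refine sum_mem fun i _ ↦ ?_
    by_cases hi : e i = 0
    · rw [hi]
      exact zero_mem _
    · exact Submodule.mem_iSup_of_mem i <|
        Submodule.mem_iSup_of_mem hi (Submodule.mem_span_singleton_self _)

theorem exists_eq_smul_of_commute [IsAlgClosed k] [FiniteDimensional k V]
    [IsSemisimpleModule A V] (hcomm : ∀ φ ψ : Module.End A V, Commute φ ψ) {S : Type*}
    [AddCommGroup S] [Module A S] [IsSimpleModule A S] {f : S →ₗ[A] V} (hf : f ≠ 0)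
    (g : S →ₗ[A] V) : ∃ c : k, g = c • f := by
  have hinj : Function.Injective f := f.injective_of_ne_zero hf
  obtain ⟨r, hr⟩ := IsSemisimpleModule.extension_property f hinj LinearMap.id
  have hrf (s : S) : r (f s) = s := DFunLike.congr_fun hr s
  have hg (s : S) : f (r (g s)) = g s := by
    have h := DFunLike.congr_fun (hcomm (f ∘ₗ r) (g ∘ₗ r)).eq (f s)
    simpa only [Module.End.mul_apply, LinearMap.comp_apply, hrf] using h
  let W : Submodule k V := (LinearMap.range f).restrictScalars k
  let T : V →ₗ[k] V := (g ∘ₗ r).restrictScalars k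
  have hT (v : V) (_ : v ∈ W) : T v ∈ W := ⟨r (g (r v)), hg _⟩
  obtain ⟨s₀, hs₀⟩ := DFunLike.ne_iff.1 hf
  have : Nontrivial W := ⟨⟨f s₀, s₀, rfl⟩, 0, fun h ↦ hs₀ (congrArg Subtype.val h)⟩
  obtain ⟨c, hc⟩ := Module.End.exists_eigenvalue (T.restrict hT)
  obtain ⟨⟨_, s, rfl⟩, hs⟩ := hc.exists_hasEigenvector
  have hgs : g s = c • f s := calc
    g s = T (f s) := congrArg g (hrf s).symm
    _ = c • f s := congrArg Subtype.val hs.apply_eq_smul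
  refine ⟨c, sub_eq_zero.1 <| by_contra fun hne ↦ hs.2 (Subtype.ext ?_)⟩
  have hs0 : s = 0 := LinearMap.injective_of_ne_zero hne <| by
    rw [map_zero, LinearMap.sub_apply, LinearMap.smul_apply, hgs, sub_self]
  exact (congrArg f hs0).trans (map_zero f)

theorem finrank_range_lsmul_le_one_of_commute [IsAlgClosed k] [FiniteDimensional k V]
    [IsSemisimpleModule A V] (hcomm : ∀ φ ψ : Module.End A V, Commute φ ψ) {e : A}
    [IsSimpleModule A (Submodule.span A {e})] (he : IsIdempotentElem e) :
    Module.finrank k (Algebra.lsmul k k V e).range ≤ 1 := by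
  let ψ (v : V) := (LinearMap.toSpanSingleton A V v).domRestrict (Submodule.span A {e})
  have hψ (v : (Algebra.lsmul k k V e).range) :
      ψ v ⟨e, Submodule.mem_span_singleton_self e⟩ = v := by
    obtain ⟨_, v, rfl⟩ := v
    change e • e • v = e • v
    rw [smul_smul, he.eq]
  rcases subsingleton_or_nontrivial (Algebra.lsmul k k V e).range with _ | _
  · rw [Module.finrank_zero_of_subsingleton]
    exact zero_le_one
  · obtain ⟨v, hv⟩ := exists_ne (0 : (Algebra.lsmul k k V e).range)
    have hψv : ψ v ≠ 0 := fun h ↦ hv <| Subtype.ext <| (hψ v).symm.trans (DFunLike.congr_fun h _)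
    refine finrank_le_one v fun w ↦ ?_
    obtain ⟨c, hc⟩ := exists_eq_smul_of_commute (k := k) hcomm hψv (ψ w)
    refine ⟨c, Subtype.ext ?_⟩
    rw [← hψ w, hc, LinearMap.smul_apply, hψ v]
    rfl

end Module

theorem commute_of_forall_isSymm_toMatrix {k A V ι : Type*} [CommRing k] [Ring A] [Algebra k A]
    [AddCommGroup V] [Module k V] [Module A V] [IsScalarTower k A V] [Fintype ι] [DecidableEq ι]
    (b : Module.Basis ι k V)
    (h : ∀ φ : Module.End A V, (LinearMap.toMatrix b b (φ.restrictScalars k)).IsSymm)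
    (φ ψ : Module.End A V) : Commute φ ψ := by
  have hmul (φ ψ : Module.End A V) : LinearMap.toMatrix b b ((φ * ψ).restrictScalars k) =
      LinearMap.toMatrix b b (φ.restrictScalars k) *
        LinearMap.toMatrix b b (ψ.restrictScalars k) :=
    LinearMap.toMatrix_comp b b b (φ.restrictScalars k) (ψ.restrictScalars k)
  refine LinearMap.restrictScalars_injective k ((LinearMap.toMatrix b b).injective ?_)
  rw [← (h (φ * ψ)).eq, hmul, Matrix.transpose_mul, (h φ).eq, (h ψ).eq, hmul]

/-! ### Counting minimal projections by the trace of the involution -/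

section Counting

theorem sum_finrank_range_lsmul_eq {k A V : Type*} [Field k] [CharZero k] [Ring A] [Algebra k A]
    [AddCommGroup V] [Module A V] [Module k V] [IsScalarTower k A V] [FiniteDimensional k V]
    {ι : Type*} [Fintype ι] {e : ι → A} (he : ∀ i, IsIdempotentElem (e i)) (hsum : ∑ i, e i = 1) :
    ∑ i, Module.finrank k (Algebra.lsmul k k V (e i)).range = Module.finrank k V := by
  refine Nat.cast_injective (R := k) ?_
  calc ((∑ i, Module.finrank k (Algebra.lsmul k k V (e i)).range : ℕ) : k)
      = ∑ i, LinearMap.trace k V (Algebra.lsmul k k V (e i)) := by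
        rw [Nat.cast_sum]
        exact Finset.sum_congr rfl fun i _ ↦
          (LinearMap.IsIdempotentElem.isProj_range _ ((he i).map (Algebra.lsmul k k V))).trace.symm
    _ = Module.finrank k V := by rw [← map_sum, ← map_sum, hsum, map_one, LinearMap.trace_one]

open scoped Finset in
theorem exists_smul_ne_zero_of_card_eq_finrank {k A V : Type*} [Field k] [CharZero k]
    [IsAlgClosed k] [Ring A] [StarRing A] [Algebra k A] [AddCommGroup V] [Module A V] [Module k V]
    [IsScalarTower k A V] [FiniteDimensional k V] [IsSemisimpleModule A V]
    (hA : ∀ a : A, star a * a = 0 → a = 0) (hcomm : ∀ φ ψ : Module.End A V, Commute φ ψ)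
    {ι : Type*} [Fintype ι] {e : ι → A}
    [DecidablePred fun i ↦ e i ≠ 0]
    (he : ∀ i, IsMinimalProjection (⊤ : Subalgebra k A) (e i)) (hsum : ∑ i, e i = 1)
    (hcard : #{i | e i ≠ 0} = Module.finrank k V) {i : ι} (hi : e i ≠ 0) :
    ∃ v : V, e i • v ≠ 0 := by
  have hle (i : ι) :
      Module.finrank k (Algebra.lsmul k k V (e i)).range ≤ if e i ≠ 0 then 1 else 0 := by
    split_ifs with h
    · have := isSimpleModule_span_of_isMinimalProjection hA (he i) h
      exact finrank_range_lsmul_le_one_of_commute hcomm (he i).2.1.1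
    · rw [not_not.1 h, map_zero, LinearMap.range_zero, finrank_bot]
  have heq := (Finset.sum_eq_sum_iff_of_le fun i _ ↦ hle i).1 <| by
    rw [sum_finrank_range_lsmul_eq (fun i ↦ (he i).2.1.1) hsum, ← hcard, Finset.card_filter]
  by_contra! h
  have hzero : Algebra.lsmul k k V (e i) = 0 := LinearMap.ext h
  have := heq i (Finset.mem_univ i)
  rw [if_pos hi, hzero, LinearMap.range_zero, finrank_bot] at this
  exact zero_ne_one this

open scoped Finset in
theorem exists_ne_zero_forall_eq_smul_of_card_eq_finrank {k A V : Type*} [Field k] [CharZero k]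
    [IsAlgClosed k] [Ring A] [StarRing A] [Algebra k A] [AddCommGroup V] [Module A V] [Module k V]
    [IsScalarTower k A V] [FiniteDimensional k V]
    (hA : ∀ a : A, star a * a = 0 → a = 0) (hcomm : ∀ φ ψ : Module.End A V, Commute φ ψ)
    {ι : Type*} [Fintype ι] {e : ι → A} [DecidablePred fun i ↦ e i ≠ 0]
    (he : ∀ i, IsMinimalProjection (⊤ : Subalgebra k A) (e i)) (hsum : ∑ i, e i = 1)
    (hcard : #{i | e i ≠ 0} = Module.finrank k V)
    (S : Type*) [AddCommGroup S] [Module A S] [IsSimpleModule A S] :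
    ∃ f : S →ₗ[A] V, f ≠ 0 ∧ ∀ g : S →ₗ[A] V, ∃ c : k, g = c • f := by
  have := isSemisimpleRing_of_sum_isMinimalProjection_eq_one hA he hsum
  have := IsSimpleModule.nontrivial A S
  obtain ⟨s, hs⟩ := exists_ne (0 : S)
  obtain ⟨i, -, his⟩ := Finset.exists_ne_zero_of_sum_ne_zero (s := Finset.univ)
    (f := fun i ↦ e i • s) (by rwa [← Finset.sum_smul, hsum, one_smul])
  have hi : e i ≠ 0 := fun h ↦ his (by rw [h, zero_smul])
  have := isSimpleModule_span_of_isMinimalProjection hA (he i) hi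
  obtain ⟨v, hv⟩ := exists_smul_ne_zero_of_card_eq_finrank hA hcomm he hsum hcard hi
  obtain ⟨f, hf⟩ := exists_linearMap_ne_zero_of_smul_ne_zero his hv
  exact ⟨f, hf, fun g ↦ exists_eq_smul_of_commute hcomm hf g⟩

variable {R : Type*} [Ring R] [StarRing R] [Algebra ℝ R] [StarModule ℝ R]

variable (R) in
/-- The involution of a real `*`-algebra as a linear map, so that its trace can be taken. -/
def starLinearMap : R →ₗ[ℝ] R where
  toFun := star
  map_add' := star_add
  map_smul' r a := by rw [star_smul, star_trivial, RingHom.id_apply]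

theorem starLinearMap_apply (a : R) : starLinearMap R a = star a := rfl

theorem IsMinimalProjection.trace_mulLeft_mul_starLinearMap [FiniteDimensional ℝ R] {p : R}
    (hp : IsMinimalProjection (⊤ : Subalgebra ℝ R) p) :
    LinearMap.trace ℝ R (LinearMap.mulLeft ℝ p * starLinearMap R) =
      Module.finrank ℝ (Submodule.span ℝ {p}) := by
  obtain ⟨-, ⟨hidem, hsa⟩, hmin⟩ := hp
  have hL : LinearMap.mulLeft ℝ p * starLinearMap R =
      LinearMap.mulLeft ℝ p * (LinearMap.mulLeft ℝ p * starLinearMap R) := by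
    exact LinearMap.ext fun a ↦ by simp [← mul_assoc, hidem.eq]
  have happly (a : R) :
      (LinearMap.mulLeft ℝ p * starLinearMap R * LinearMap.mulLeft ℝ p) a = p * star a * p := by
    simp only [Module.End.mul_apply, LinearMap.mulLeft_apply, starLinearMap_apply, star_mul,
      hsa.star_eq, mul_assoc]
  have hproj : LinearMap.IsProj (Submodule.span ℝ {p})
      (LinearMap.mulLeft ℝ p * starLinearMap R * LinearMap.mulLeft ℝ p) := by
    refine ⟨fun a ↦ ?_, fun a ha ↦ ?_⟩
    · obtain ⟨r, hr⟩ := hmin (star a) trivial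
      rw [happly, hr]
      exact Submodule.smul_mem _ r (Submodule.mem_span_singleton_self p)
    · obtain ⟨r, rfl⟩ := Submodule.mem_span_singleton.1 ha
      rw [map_smul, happly, hsa.star_eq, hidem.eq, hidem.eq]
  rw [hL, LinearMap.trace_mul_comm, hproj.trace]

open scoped Finset in
theorem card_ne_zero_eq_trace_starLinearMap [FiniteDimensional ℝ R] {ι : Type*} [Fintype ι]
    {p : ι → R} [DecidablePred fun i ↦ p i ≠ 0]
    (hp : ∀ i, IsMinimalProjection (⊤ : Subalgebra ℝ R) (p i)) (hsum : ∑ i, p i = 1) :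
    (#{i | p i ≠ 0} : ℝ) = LinearMap.trace ℝ R (starLinearMap R) := by
  have hrank (i : ι) :
      (Module.finrank ℝ (Submodule.span ℝ {p i}) : ℝ) = if p i ≠ 0 then 1 else 0 := by
    split_ifs with h
    · rw [finrank_span_singleton h, Nat.cast_one]
    · rw [not_not.1 h, Submodule.span_zero_singleton, finrank_bot, Nat.cast_zero]
  calc (#{i | p i ≠ 0} : ℝ)
      = ∑ i, LinearMap.trace ℝ R (LinearMap.mulLeft ℝ (p i) * starLinearMap R) := by
        simp only [(hp _).trace_mulLeft_mul_starLinearMap, hrank, Finset.sum_boole]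
    _ = LinearMap.trace ℝ R (LinearMap.mulLeft ℝ (∑ i, p i) * starLinearMap R) := by
        rw [← map_sum, ← Finset.sum_mul]
        exact congrArg (fun f ↦ LinearMap.trace ℝ R (f * _)) (map_sum (LinearMap.mul ℝ R) p _).symm
    _ = LinearMap.trace ℝ R (starLinearMap R) := by rw [hsum, LinearMap.mulLeft_one]; rfl

theorem trace_starLinearMap_monoidAlgebra {M : Type*} [Monoid M] [StarMul M] [Finite M] :
    LinearMap.trace ℝ _ (starLinearMap (MonoidAlgebra ℝ M)) = Nat.card {x : M // star x = x} := by
  classical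
  have := Fintype.ofFinite M
  rw [LinearMap.trace_eq_matrix_trace ℝ (MonoidAlgebra.basis M ℝ), Matrix.trace,
    Nat.card_eq_fintype_card, Fintype.card_subtype]
  have h (x : M) : (LinearMap.toMatrix (MonoidAlgebra.basis M ℝ)
      (MonoidAlgebra.basis M ℝ) (starLinearMap _)).diag x = if star x = x then 1 else 0 := by
    rw [Matrix.diag_apply, LinearMap.toMatrix_apply, MonoidAlgebra.basis_apply,
      starLinearMap_apply, star_monoidAlgebra_single, star_one, ← MonoidAlgebra.basis_apply,
      Module.Basis.repr_self, Finsupp.single_apply]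
  simp only [h, Finset.sum_boole]

end Counting

/-! ### Passing from `ℝ` to `ℂ` -/

section Complexify

variable {M : Type*} [Monoid M]

variable (M) in
/-- The inclusion `ℝ[M] → ℂ[M]` of monoid algebras. -/
noncomputable def complexify : MonoidAlgebra ℝ M →ₐ[ℝ] MonoidAlgebra ℂ M :=
  MonoidAlgebra.mapAlgHom M Complex.ofRealAm

theorem complexify_single (x : M) (r : ℝ) :
    complexify M (MonoidAlgebra.single x r) = MonoidAlgebra.single x (r : ℂ) :=
  MonoidAlgebra.map_single ..

theorem complexify_injective : Function.Injective (complexify M) := by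
  intro a b h
  ext x
  have hx := congrArg (MonoidAlgebra.coeff · x) h
  simpa [complexify] using hx

variable [StarMul M]

theorem star_complexify (a : MonoidAlgebra ℝ M) :
    star (complexify M a) = complexify M (star a) := by
  induction a using MonoidAlgebra.induction_linear with
  | zero => simp
  | add a b ha hb => simp only [map_add, star_add, ha, hb]
  | single x r => simp [star_monoidAlgebra_single, complexify_single]

theorem isMinimalProjection_complexify {p : MonoidAlgebra ℝ M}
    (hp : IsMinimalProjection (⊤ : Subalgebra ℝ (MonoidAlgebra ℝ M)) p) :
    IsMinimalProjection (⊤ : Subalgebra ℂ (MonoidAlgebra ℂ M)) (complexify M p) := by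
  obtain ⟨-, ⟨hidem, hsa⟩, hmin⟩ := hp
  refine ⟨trivial, ⟨hidem.map _, ?_⟩, fun a _ ↦ ?_⟩
  · rw [IsSelfAdjoint, star_complexify, hsa.star_eq]
  induction a using MonoidAlgebra.induction_linear with
  | zero => exact ⟨0, by simp⟩
  | add a b ha hb =>
    obtain ⟨c, hc⟩ := ha trivial
    obtain ⟨d, hd⟩ := hb trivial
    exact ⟨c + d, by rw [mul_add, add_mul, hc, hd, add_smul]⟩
  | single x z =>
    obtain ⟨r, hr⟩ := hmin (MonoidAlgebra.single x 1) trivial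
    refine ⟨z * r, ?_⟩
    have hsingle : MonoidAlgebra.single x z = z • complexify M (MonoidAlgebra.single x 1) := by
      simp [complexify_single]
    rw [hsingle, mul_smul_comm, smul_mul_assoc, ← map_mul, ← map_mul, hr, map_smul, mul_smul,
      Complex.coe_smul]

end Complexify

namespace ISn

theorem exists_sum_isMinimalProjection_eq_one (n : ℕ) :
    ∃ (m : ℕ) (p : Fin m → MonoidAlgebra ℝ (ISn n)),
      (∀ i, IsMinimalProjection (⊤ : Subalgebra ℝ (MonoidAlgebra ℝ (ISn n))) (p i)) ∧
      ∑ i, p i = 1 := by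
  obtain ⟨l, hl, hsum⟩ :=
    AddSubmonoid.exists_list_of_mem_closure (one_mem_closure_isMinimalProjection n)
  exact ⟨l.length, (l[·]), fun i ↦ hl _ (l.getElem_mem i.2), (Fin.sum_univ_getElem l).trans hsum⟩

end ISn

/-! ### The commutant of signed conjugation -/

namespace ISInv

variable {n : ℕ}

theorem apply_comm (w : ISInv n) {a b : Fin n} (h : w.1 a = some b) : w.1 b = some a := by
  rwa [← PEquiv.eq_some_iff, w.2]

/-- The extension of a partial involution by the identity outside its domain. -/
def toPerm (w : ISInv n) : Perm (Fin n) :=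
  Function.Involutive.toPerm (fun a ↦ (w.1 a).getD a) fun a ↦ by
    cases hw : w.1 a with
    | none => simp only [hw, Option.getD_none]
    | some b => simp only [hw, w.apply_comm hw, Option.getD_some]

theorem involutive_toPerm (w : ISInv n) : Function.Involutive w.toPerm :=
  Function.Involutive.toPerm_involutive _

variable {w w' : ISInv n}

theorem toPerm_apply_of_eq_some {a b : Fin n} (h : w.1 a = some b) : w.toPerm a = b :=
  (congrArg (Option.getD · a) h :)

theorem toPerm_apply_of_eq_none {a : Fin n} (h : w.1 a = none) : w.toPerm a = a :=
  (congrArg (Option.getD · a) h :)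

theorem apply_eq_some_iff_of_ne {a b : Fin n} (hab : a ≠ b) :
    w.1 a = some b ↔ w.toPerm a = b := by
  refine ⟨toPerm_apply_of_eq_some, fun h ↦ ?_⟩
  cases hw : w.1 a with
  | none => exact absurd ((toPerm_apply_of_eq_none hw).symm.trans h) hab
  | some c => rw [← h, toPerm_apply_of_eq_some hw]

theorem apply_eq_some_iff {a b : Fin n} :
    w.1 a = some b ↔ (w.1 a).isSome ∧ w.toPerm a = b := by
  refine ⟨fun h ↦ ⟨h ▸ rfl, toPerm_apply_of_eq_some h⟩, ?_⟩
  rintro ⟨ha, rfl⟩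
  obtain ⟨b, hb⟩ := Option.isSome_iff_exists.1 ha
  rw [toPerm_apply_of_eq_some hb, hb]

end ISInv

section ConjIS

variable {n : ℕ} {x : ISn n} {w w' : ISInv n}

theorem conjIS_apply_eq_some {c d : Fin n} :
    (conjIS x w).1 c = some d ↔ ∃ a b, x a = some c ∧ w.1 a = some b ∧ x b = some d := by
  simp only [conjIS, PEquiv.trans_eq_some, PEquiv.eq_some_iff]
  exact ⟨fun ⟨b, ⟨a, ha, hb⟩, hd⟩ ↦ ⟨a, b, ha, hb, hd⟩,
    fun ⟨a, b, ha, hb, hd⟩ ↦ ⟨b, ⟨a, ha, hb⟩, hd⟩⟩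

theorem ISn.isSome_ofSet_iff {s : Set (Fin n)} [DecidablePred (· ∈ s)] {a : Fin n} :
    (PEquiv.ofSet s a).isSome ↔ a ∈ s := by
  simp [Option.isSome_iff_exists, PEquiv.ofSet_eq_some_iff]

theorem conjIS_symm_conjIS (h : ∀ a, (w.1 a).isSome → (x a).isSome) :
    conjIS x.symm (conjIS x w) = w := by
  refine Subtype.ext (PEquiv.ext fun a ↦ Option.ext fun b ↦ ?_)
  simp only [conjIS_apply_eq_some, PEquiv.eq_some_iff]
  constructor
  · rintro ⟨c, d, hc, ⟨a', b', ha', hw, hb'⟩, hb⟩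
    obtain rfl := x.inj ha' hc
    obtain rfl := x.inj hb' hb
    exact hw
  · intro hab
    obtain ⟨c, hc⟩ := Option.isSome_iff_exists.1 (h a (hab ▸ rfl))
    obtain ⟨d, hd⟩ := Option.isSome_iff_exists.1 (h b (w.apply_comm hab ▸ rfl))
    exact ⟨c, d, hc, ⟨a, b, hc, hab, hd⟩, hd⟩

theorem conjIS_ofSet {s : Set (Fin n)} [DecidablePred (· ∈ s)]
    (h : ∀ a, (w.1 a).isSome → a ∈ s) : conjIS (PEquiv.ofSet s) w = w := by
  refine Subtype.ext (PEquiv.ext fun c ↦ Option.ext fun d ↦ ?_)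
  simp only [conjIS_apply_eq_some, PEquiv.ofSet_eq_some_iff]
  constructor
  · rintro ⟨a, b, ⟨rfl, -⟩, hab, rfl, -⟩
    exact hab
  · intro hcd
    exact ⟨c, d, ⟨rfl, h c (hcd ▸ rfl)⟩, hcd, rfl, h d (w.apply_comm hcd ▸ rfl)⟩

theorem invIS_ofSet {s : Set (Fin n)} [DecidablePred (· ∈ s)] :
    invIS w (PEquiv.ofSet s) = 0 := by
  rw [invIS, Set.ncard_eq_zero, Set.eq_empty_iff_forall_notMem]
  rintro ⟨a, b⟩ ⟨hab, -, u, v, hu, hv, hvu⟩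
  obtain ⟨rfl, -⟩ := PEquiv.ofSet_eq_some_iff.1 hu
  obtain ⟨rfl, -⟩ := PEquiv.ofSet_eq_some_iff.1 hv
  exact hab.asymm hvu

theorem invIS_ofPerm (w : ISInv n) (π : Perm (Fin n)) :
    invIS w (ISn.ofPerm π) = pairInversions w.toPerm π := by
  have hinj : Function.Injective fun a ↦ (a, w.toPerm a) := fun a b h ↦ congrArg Prod.fst h
  rw [invIS, pairInversions, ← Set.ncard_coe_finset, ← Set.ncard_image_of_injective _ hinj]
  congr 1
  ext ⟨a, b⟩
  simp only [Set.mem_ofPred_eq, Set.mem_image, Finset.coe_filter, Finset.mem_univ, true_and,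
    ISn.ofPerm_apply, Option.some.injEq, Prod.mk.injEq]
  constructor
  · rintro ⟨hab, hw, _, _, rfl, rfl, h⟩
    obtain rfl := ISInv.toPerm_apply_of_eq_some hw
    exact ⟨a, ⟨hab, h⟩, rfl, rfl⟩
  · rintro ⟨a, ⟨hab, h⟩, rfl, rfl⟩
    exact ⟨hab, (ISInv.apply_eq_some_iff_of_ne hab.ne).2 rfl, _, _, rfl, rfl, h⟩

theorem conjIS_ofPerm {σ : Perm (Fin n)} (hdom : ∀ a, (w'.1 (σ a)).isSome = (w.1 a).isSome)
    (hσ : ∀ a, σ (w.toPerm a) = w'.toPerm (σ a)) : conjIS (ISn.ofPerm σ) w = w' := by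
  refine Subtype.ext (PEquiv.ext fun c ↦ Option.ext fun d ↦ ?_)
  obtain ⟨a, rfl⟩ := σ.surjective c
  rw [conjIS_apply_eq_some]
  simp only [ISn.ofPerm_apply, Option.some.injEq, ISInv.apply_eq_some_iff, hdom, ← hσ]
  constructor
  · rintro ⟨b, _, hb, ⟨hs, rfl⟩, rfl⟩
    obtain rfl := σ.injective hb
    exact ⟨hs, rfl⟩
  · rintro ⟨hs, h⟩
    exact ⟨a, _, rfl, ⟨hs, rfl⟩, h⟩

end ConjIS

section Action

variable {n : ℕ} [Module (MonoidAlgebra ℂ (ISn n)) (VIS n)]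

variable (n) in
/-- The action of `ℂ[ISₙ]` on `V` is the signed conjugation of the basis of partial involutions. -/
def IsSignedConjugation : Prop :=
  ∀ (x : ISn n) (w : ISInv n),
    MonoidAlgebra.of ℂ (ISn n) x • (Finsupp.single w (1 : ℂ) : VIS n) =
      if ∀ a, (w.1 a).isSome → (x a).isSome then
        ((-1 : ℂ) ^ invIS w x) • Finsupp.single (conjIS x w) (1 : ℂ)
      else 0

namespace IsSignedConjugation

variable [IsScalarTower ℂ (MonoidAlgebra ℂ (ISn n)) (VIS n)] (hV : IsSignedConjugation n)
  {x : ISn n} {w w' : ISInv n}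

include hV

theorem of_smul_apply_conjIS (v : VIS n) (hw : ∀ a, (w.1 a).isSome → (x a).isSome) :
    (MonoidAlgebra.of ℂ (ISn n) x • v) (conjIS x w) = (-1) ^ invIS w x * v w := by
  induction v using Finsupp.induction_linear with
  | zero => simp only [smul_zero, Finsupp.coe_zero, Pi.zero_apply, mul_zero]
  | add u v hu hv => simp only [smul_add, Finsupp.add_apply, hu, hv, mul_add]
  | single u c =>
    rw [← Finsupp.smul_single_one, smul_comm, Finsupp.smul_apply, hV]
    split_ifs with hu
    · rcases eq_or_ne u w with rfl | huw
      · simp [mul_comm]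
      · have hne : conjIS x u ≠ conjIS x w := fun h ↦
          huw <| by rw [← conjIS_symm_conjIS hu, h, conjIS_symm_conjIS hw]
        simp [hne, huw]
    · have huw : u ≠ w := by rintro rfl; exact hu hw
      simp [huw]

theorem of_smul_apply_eq_zero (v : VIS n) {a : Fin n} (hw : (w.1 a).isSome)
    (hx : x.symm a = none) : (MonoidAlgebra.of ℂ (ISn n) x • v) w = 0 := by
  induction v using Finsupp.induction_linear with
  | zero => simp only [smul_zero, Finsupp.coe_zero, Pi.zero_apply]
  | add u v hu hv => simp only [smul_add, Finsupp.add_apply, hu, hv, add_zero]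
  | single u c =>
    rw [← Finsupp.smul_single_one, smul_comm, Finsupp.smul_apply, hV]
    have hne : conjIS x u ≠ w := by
      rintro rfl
      obtain ⟨b, hb⟩ := Option.isSome_iff_exists.1 hw
      obtain ⟨c, d, hc, -⟩ := conjIS_apply_eq_some.1 hb
      rw [← PEquiv.eq_some_iff, hx] at hc
      cases hc
    split_ifs <;> simp [hne]

variable (φ : Module.End (MonoidAlgebra ℂ (ISn n)) (VIS n))

theorem end_apply_conjIS (hw : ∀ a, (w.1 a).isSome → (x a).isSome)
    (hw' : ∀ a, (w'.1 a).isSome → (x a).isSome) :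
    (-1) ^ invIS w x * φ (Finsupp.single (conjIS x w) 1) (conjIS x w') =
      (-1) ^ invIS w' x * φ (Finsupp.single w 1) w' := by
  rw [← hV.of_smul_apply_conjIS _ hw', ← map_smul, hV, if_pos hw, LinearMap.map_smul_of_tower,
    Finsupp.smul_apply, smul_eq_mul]

theorem end_apply_eq_zero_of_isSome_of_eq_none {a : Fin n} (hw : (w.1 a).isSome)
    (hw' : w'.1 a = none) : φ (Finsupp.single w 1) w' = 0 := by
  classical
  have hdom (b : Fin n) (hb : (w'.1 b).isSome) : b ∈ ({a}ᶜ : Set (Fin n)) := by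
    rintro rfl
    exact Option.isSome_iff_ne_none.1 hb hw'
  have hkill : MonoidAlgebra.of ℂ (ISn n) (PEquiv.ofSet {a}ᶜ) •
      (Finsupp.single w 1 : VIS n) = 0 := by
    rw [hV, if_neg fun h ↦ absurd rfl (ISn.isSome_ofSet_iff.1 (h a hw))]
  have h := hV.of_smul_apply_conjIS (φ (Finsupp.single w 1)) fun b hb ↦
    ISn.isSome_ofSet_iff.2 (hdom b hb)
  rwa [← map_smul, hkill, map_zero, Finsupp.zero_apply, invIS_ofSet, pow_zero, one_mul,
    eq_comm] at h

theorem end_apply_eq_zero_of_eq_none_of_isSome {a : Fin n} (hw : w.1 a = none)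
    (hw' : (w'.1 a).isSome) : φ (Finsupp.single w 1) w' = 0 := by
  classical
  have hdom (b : Fin n) (hb : (w.1 b).isSome) : b ∈ ({a}ᶜ : Set (Fin n)) := by
    rintro rfl
    exact Option.isSome_iff_ne_none.1 hb hw
  have hfix : MonoidAlgebra.of ℂ (ISn n) (PEquiv.ofSet {a}ᶜ) •
      (Finsupp.single w 1 : VIS n) = Finsupp.single w 1 := by
    rw [hV, if_pos fun b hb ↦ ISn.isSome_ofSet_iff.2 (hdom b hb), conjIS_ofSet hdom, invIS_ofSet,
      pow_zero, one_smul]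
  rw [← hfix, map_smul]
  refine hV.of_smul_apply_eq_zero _ hw' (Option.not_isSome_iff_eq_none.1 fun h ↦ ?_)
  rw [PEquiv.ofSet_symm, ISn.isSome_ofSet_iff] at h
  exact h rfl

theorem neg_one_pow_invIS_mul_of_swap {σ : Perm (Fin n)} (hσ : Function.Involutive σ)
    (hw : conjIS (ISn.ofPerm σ) w = w') (hw' : conjIS (ISn.ofPerm σ) w' = w) :
    (-1 : ℂ) ^ invIS w (ISn.ofPerm σ) * (-1) ^ invIS w' (ISn.ofPerm σ) = 1 := by
  have hsq : ISn.ofPerm σ * ISn.ofPerm σ = 1 := by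
    rw [← map_mul, show σ * σ = 1 from Perm.ext hσ, map_one]
  have h (u : ISInv n) (v : VIS n) :=
    hV.of_smul_apply_conjIS (x := ISn.ofPerm σ) (w := u) v fun _ _ ↦ rfl
  have hw₁ := h w (Finsupp.single w 1)
  have hw₂ := h w' (MonoidAlgebra.of ℂ (ISn n) (ISn.ofPerm σ) • Finsupp.single w 1)
  rw [hw, Finsupp.single_eq_same, mul_one] at hw₁
  rw [hw', smul_smul, ← map_mul, hsq, map_one, one_smul, Finsupp.single_eq_same, hw₁] at hw₂
  rw [mul_comm, ← hw₂]

theorem end_apply_comm_of_swap {σ : Perm (Fin n)} (hσ : Function.Involutive σ)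
    (hw : conjIS (ISn.ofPerm σ) w = w') (hw' : conjIS (ISn.ofPerm σ) w' = w) :
    φ (Finsupp.single w 1) w' = φ (Finsupp.single w' 1) w := by
  have hsign := hV.neg_one_pow_invIS_mul_of_swap hσ hw hw'
  have hsq : ((-1 : ℂ) ^ invIS w' (ISn.ofPerm σ)) ^ 2 = 1 := by rw [pow_right_comm]; simp
  have h := hV.end_apply_conjIS φ (x := ISn.ofPerm σ) (w := w) (w' := w') (fun _ _ ↦ rfl)
    fun _ _ ↦ rfl
  rw [hw, hw'] at h
  linear_combination φ (Finsupp.single w' 1) w * hsign -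
    (-1) ^ invIS w' (ISn.ofPerm σ) * h - φ (Finsupp.single w 1) w' * hsq

theorem end_apply_eq_zero_of_odd {π : Perm (Fin n)} (hw : conjIS (ISn.ofPerm π) w = w)
    (hw' : conjIS (ISn.ofPerm π) w' = w')
    (hodd : (pairInversions w.toPerm π + pairInversions w'.toPerm π : ZMod 2) = 1) :
    φ (Finsupp.single w 1) w' = 0 := by
  have hsign : (-1 : ℂ) ^ invIS w (ISn.ofPerm π) * (-1) ^ invIS w' (ISn.ofPerm π) = -1 := by
    rw [← pow_add, invIS_ofPerm, invIS_ofPerm]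
    exact (ZMod.natCast_eq_one_iff_odd.1 (by exact_mod_cast hodd)).neg_one_pow
  have hsq : ((-1 : ℂ) ^ invIS w' (ISn.ofPerm π)) ^ 2 = 1 := by rw [pow_right_comm]; simp
  have h := hV.end_apply_conjIS φ (x := ISn.ofPerm π) (w := w) (w' := w') (fun _ _ ↦ rfl)
    fun _ _ ↦ rfl
  rw [hw, hw'] at h
  linear_combination (φ (Finsupp.single w 1) w' * (hsign - hsq) -
    (-1) ^ invIS w' (ISn.ofPerm π) * h) / 2

theorem end_apply_comm_of_isSome_eq (hdom : ∀ a, (w.1 a).isSome = (w'.1 a).isSome) :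
    φ (Finsupp.single w 1) w' = φ (Finsupp.single w' 1) w := by
  have hinvariant {σ : Perm (Fin n)} (hσ : Function.Involutive σ)
      (hfix : ∀ a, w.toPerm a = a → w'.toPerm a = a → σ a = a) (a : Fin n) :
      (w.1 (σ a)).isSome = (w.1 a).isSome := by
    have hfix' (b : Fin n) (hb : ¬ (w.1 b).isSome) : σ b = b :=
      hfix b (ISInv.toPerm_apply_of_eq_none (Option.not_isSome_iff_eq_none.1 hb))
        (ISInv.toPerm_apply_of_eq_none (Option.not_isSome_iff_eq_none.1 (hdom b ▸ hb)))
    by_cases ha : (w.1 a).isSome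
    · refine Bool.eq_iff_iff.2 (iff_of_true (by_contra fun hσa ↦ hσa ?_) ha)
      rwa [← hfix' _ hσa, hσ a]
    · rw [hfix' a ha]
  rcases exists_swapping_or_commuting_involution w.involutive_toPerm w'.involutive_toPerm with
    ⟨σ, hσ, hσw, hfix⟩ | ⟨π, hπ, hπw, hπw', hfix, hodd⟩
  · have hσw' (a : Fin n) : σ (w'.toPerm a) = w.toPerm (σ a) := by
      rw [← hσ (w.toPerm (σ a)), hσw, hσ a]
    refine hV.end_apply_comm_of_swap φ hσ (conjIS_ofPerm (fun a ↦ ?_) hσw)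
      (conjIS_ofPerm (fun a ↦ ?_) hσw')
    · rw [← hdom, hinvariant hσ hfix]
    · rw [hinvariant hσ hfix, hdom]
  · have hw : conjIS (ISn.ofPerm π) w = w := conjIS_ofPerm (hinvariant hπ hfix) hπw
    have hw' : conjIS (ISn.ofPerm π) w' = w' :=
      conjIS_ofPerm (fun a ↦ by rw [← hdom, ← hdom, hinvariant hπ hfix]) hπw'
    rw [hV.end_apply_eq_zero_of_odd φ hw hw' hodd,
      hV.end_apply_eq_zero_of_odd φ hw' hw (by rw [add_comm, hodd])]

theorem end_apply_comm (w w' : ISInv n) :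
    φ (Finsupp.single w 1) w' = φ (Finsupp.single w' 1) w := by
  by_cases hdom : ∀ a, (w.1 a).isSome = (w'.1 a).isSome
  · exact hV.end_apply_comm_of_isSome_eq φ hdom
  · obtain ⟨a, ha⟩ := not_forall.1 hdom
    rcases hw : w.1 a with _ | b <;> rcases hw' : w'.1 a with _ | b'
    · simp [hw, hw'] at ha
    · have hs : (w'.1 a).isSome := hw' ▸ rfl
      rw [hV.end_apply_eq_zero_of_eq_none_of_isSome φ hw hs,
        hV.end_apply_eq_zero_of_isSome_of_eq_none φ hs hw]
    · have hs : (w.1 a).isSome := hw ▸ rfl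
      rw [hV.end_apply_eq_zero_of_eq_none_of_isSome φ hw' hs,
        hV.end_apply_eq_zero_of_isSome_of_eq_none φ hs hw']
    · simp [hw, hw'] at ha

theorem commute_end (φ ψ : Module.End (MonoidAlgebra ℂ (ISn n)) (VIS n)) : Commute φ ψ := by
  classical
  refine commute_of_forall_isSymm_toMatrix (k := ℂ) Finsupp.basisSingleOne (fun φ ↦ ?_) φ ψ
  ext w w'
  simp [LinearMap.toMatrix_apply, hV.end_apply_comm φ w]

end IsSignedConjugation

end Action

namespace ISn

variable {n : ℕ}

theorem eq_zero_of_star_mul_self_eq_zero {a : MonoidAlgebra ℂ (ISn n)} (h : star a * a = 0) :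
    a = 0 := by
  by_contra ha
  have hpos := faithfulFunctional_star_mul_self_pos ha
  rw [h, map_zero, map_zero] at hpos
  exact hpos.false

open scoped Finset in
theorem card_complexify_ne_zero_eq_finrank {ι : Type*} [Fintype ι]
    {p : ι → MonoidAlgebra ℝ (ISn n)} [DecidablePred fun i ↦ complexify (ISn n) (p i) ≠ 0]
    (hp : ∀ i, IsMinimalProjection (⊤ : Subalgebra ℝ (MonoidAlgebra ℝ (ISn n))) (p i))
    (hsum : ∑ i, p i = 1) :
    #{i | complexify (ISn n) (p i) ≠ 0} = Module.finrank ℂ (VIS n) := by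
  classical
  rify
  calc (#{i | complexify (ISn n) (p i) ≠ 0} : ℝ)
      = #{i | p i ≠ 0} := by
        simp only [ne_eq, map_eq_zero_iff _ (complexify_injective (M := ISn n))]
    _ = Nat.card (ISInv n) :=
        (card_ne_zero_eq_trace_starLinearMap hp hsum).trans
          (trace_starLinearMap_monoidAlgebra (M := ISn n))
    _ = Module.finrank ℂ (VIS n) := by
        rw [Module.finrank_finsupp_self, Nat.card_eq_fintype_card]

end ISn

/-- The `ℂ[ISₙ]`-module `V` obtained by extending linearly the action
`x · I_w = (−1)^{inv_w(x)} I_{x w x⁻¹}` if `dom(w) ⊆ dom(x)` and `x · I_w = 0` otherwise,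
is a Gelfand model for the semigroup algebra `ℂ[ISₙ]`: for every simple
`ℂ[ISₙ]`-module `S`, the space `Hom_{ℂ[ISₙ]}(S, V)` is one-dimensional over `ℂ`. -/
theorem gelfand_model_CISn (n : ℕ) (hn : 1 ≤ n)
    [Module (MonoidAlgebra ℂ (ISn n)) (VIS n)]
    [IsScalarTower ℂ (MonoidAlgebra ℂ (ISn n)) (VIS n)]
    (hact : ∀ (x : ISn n) (w : ISInv n),
      (MonoidAlgebra.of ℂ (ISn n) x) • (Finsupp.single w (1 : ℂ) : VIS n) =
        if ∀ a : Fin n, (w.1 a).isSome → (x a).isSome then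
          ((-1 : ℂ) ^ invIS w x) • Finsupp.single (conjIS x w) (1 : ℂ)
        else 0) :
    ∀ (S : Type) [AddCommGroup S] [Module (MonoidAlgebra ℂ (ISn n)) S]
      [IsSimpleModule (MonoidAlgebra ℂ (ISn n)) S],
      ∃ f : S →ₗ[MonoidAlgebra ℂ (ISn n)] VIS n, f ≠ 0 ∧
        ∀ g : S →ₗ[MonoidAlgebra ℂ (ISn n)] VIS n, ∃ c : ℂ, ∀ s : S, g s = c • f s := by
  intro S _ _ _
  classical
  have hV : IsSignedConjugation n := hact
  obtain ⟨m, p, hp, hsum⟩ := ISn.exists_sum_isMinimalProjection_eq_one n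
  obtain ⟨f, hf, hunique⟩ := exists_ne_zero_forall_eq_smul_of_card_eq_finrank
    (fun _ ↦ ISn.eq_zero_of_star_mul_self_eq_zero) hV.commute_end
    (fun i ↦ isMinimalProjection_complexify (hp i)) (by rw [← map_sum, hsum, map_one])
    (ISn.card_complexify_ne_zero_eq_finrank hp hsum) S
  refine ⟨f, hf, fun g ↦ ?_⟩
  obtain ⟨c, rfl⟩ := hunique g
  exact ⟨c, fun _ ↦ rfl⟩
end
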